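/- arXiv:2510.06900 — 2 statements merged into one kernel-verified Lean document; each statement's English description precedes it below -/
import Mathlib

section
/- Let d ≥ 1 and let E ⊆ [0,1]^d be a (log N_n / N_n)_n-dense Cantor set built on an increasing sequence (N_n) of powers of two with N_1 ≥ 2. Then for every 0 < β ≤ 1, every metric space Y and every β-power quasisymmetry f : E → Y, one has dim_H f(E) ≥ d (in particular, since dim_H E = d, the Hausdorff dimension of E cannot be lowered by power quasisymmetries). -/
open Set Metric MeasureTheory ProbabilityTheory Filter
open scoped ENNReal NNReal Classical

noncomputable section

/-- A distortion function: a homeomorphism of `[0,∞)` onto itself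
(equivalently, a continuous strictly increasing surjection of `[0,∞)` with `η 0 = 0`). -/
def IsDistortion (η : ℝ → ℝ) : Prop :=
  ContinuousOn η (Set.Ici 0) ∧ StrictMonoOn η (Set.Ici 0) ∧ η 0 = 0 ∧
    Set.SurjOn η (Set.Ici 0) (Set.Ici 0)

/-- `f` is an `η`-quasisymmetry on the set `E`:
it is injective on `E` and satisfies the quasisymmetry inequality on points of `E`. -/
def IsQSOn {X Y : Type*} [MetricSpace X] [MetricSpace Y] (η : ℝ → ℝ) (f : X → Y)
    (E : Set X) : Prop :=
  Set.InjOn f E ∧ ∀ x ∈ E, ∀ y ∈ E, ∀ z ∈ E, x ≠ z →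
    dist (f x) (f y) ≤ η (dist x y / dist x z) * dist (f x) (f z)

/-- `f` is a `β`-power quasisymmetry on `E`: an `η`-quasisymmetry with
`η t = C * max (t ^ β) (t ^ (1 / β))` for some `C > 0`. -/
def IsPowerQSOn {X Y : Type*} [MetricSpace X] [MetricSpace Y] (β : ℝ) (f : X → Y)
    (E : Set X) : Prop :=
  ∃ C : ℝ, 0 < C ∧ IsQSOn (fun t => C * max (t ^ β) (t ^ (1 / β))) f E

/-- Distance between two sets: `inf {dist a b : a ∈ A, b ∈ B}`. -/
def setDist {X : Type*} [MetricSpace X] (A B : Set X) : ℝ :=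
  sInf (Set.image2 dist A B)

/-- The closed axis-parallel cube with lower corner `c` and side length `l`. -/
def cube {d : ℕ} (c : Fin d → ℝ) (l : ℝ) : Set (EuclideanSpace ℝ (Fin d)) :=
  {x | ∀ i, c i ≤ x i ∧ x i ≤ c i + l}

/-- Lower corner of the subcube with address `a` when the cube with lower corner `c` and
side `l` is divided into `K ^ d` congruent subcubes. -/
def childCorner {d : ℕ} (c : Fin d → ℝ) (l : ℝ) (K : ℕ) (a : Fin d → Fin K) : Fin d → ℝ :=
  fun i => c i + l / K * (a i : ℝ)

/-- Side length `N ^ (-m*n)` of level-`n` cubes in the `(N,m)`-fat Cantor construction. -/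
def fatSide (N m n : ℕ) : ℝ := ((N : ℝ) ^ (m * n))⁻¹

/-- `𝓕` is the sequence of families of cubes of an `(N,m)`-fat Cantor construction in `[0,1]^d`:
`𝓕 0 = {[0,1]^d}`, and each cube `Q ∈ 𝓕 n` is divided into `N^(m*d)` congruent subcubes of which
exactly one is removed, `𝓕 (n+1)` consisting of all retained subcubes. -/
def IsFatCantorFamilies (d N m : ℕ) (𝓕 : ℕ → Set (Set (EuclideanSpace ℝ (Fin d)))) : Prop :=
  𝓕 0 = {cube (fun _ => 0) 1} ∧
  (∀ n, ∀ Q ∈ 𝓕 n, ∃ c : Fin d → ℝ, Q = cube c (fatSide N m n) ∧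
    ∃ a₀ : Fin d → Fin (N ^ m),
      {Q' ∈ 𝓕 (n + 1) | Q' ⊆ Q} =
        {Q' | ∃ a : Fin d → Fin (N ^ m), a ≠ a₀ ∧
          Q' = cube (childCorner c (fatSide N m n) (N ^ m) a) (fatSide N m (n + 1))}) ∧
  (∀ n, ∀ Q' ∈ 𝓕 (n + 1), ∃ Q ∈ 𝓕 n, Q' ⊆ Q)

/-- `F` is an `(N,m)`-fat Cantor set in `[0,1]^d`. -/
def IsFatCantorSet (d N m : ℕ) (F : Set (EuclideanSpace ℝ (Fin d))) : Prop :=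
  ∃ 𝓕, IsFatCantorFamilies d N m 𝓕 ∧ F = ⋂ n, ⋃₀ 𝓕 n

/-- Side length `∏_{m=1}^n (N m)⁻¹` of level-`n` cubes of a dense-Cantor construction with
subdivision sequence `N`. -/
def denseSide (N : ℕ → ℕ) (n : ℕ) : ℝ := ∏ m ∈ Finset.Icc 1 n, ((N m : ℝ))⁻¹

/-- `𝓔` is the sequence of families of cubes of a dense-Cantor construction in `[0,1]^d`
with subdivision sequence `N`: `𝓔 0 = {[0,1]^d}`, every cube of `𝓔 (n+1)` is one of the
`(N (n+1))^d` congruent subcubes of a cube of `𝓔 n`, and every cube of `𝓔 n` has at least one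
retained subcube in `𝓔 (n+1)`. -/
def IsDenseCantorFamilies (d : ℕ) (N : ℕ → ℕ)
    (𝓔 : ℕ → Set (Set (EuclideanSpace ℝ (Fin d)))) : Prop :=
  𝓔 0 = {cube (fun _ => 0) 1} ∧
  (∀ n, ∀ Q' ∈ 𝓔 (n + 1), ∃ Q ∈ 𝓔 n, Q' ⊆ Q ∧ ∃ c : Fin d → ℝ, Q = cube c (denseSide N n) ∧
      ∃ a : Fin d → Fin (N (n + 1)),
        Q' = cube (childCorner c (denseSide N n) (N (n + 1)) a) (denseSide N (n + 1))) ∧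
  (∀ n, ∀ Q ∈ 𝓔 n, ∃ Q' ∈ 𝓔 (n + 1), Q' ⊆ Q)

/-- A (possibly degenerate) line segment parallel to the `d`-th coordinate direction
(the kernel of the projection to the first `d-1` coordinates). -/
def IsVerticalSeg {d : ℕ} (A : Set (EuclideanSpace ℝ (Fin d))) : Prop :=
  ∃ x y : EuclideanSpace ℝ (Fin d), A = segment ℝ x y ∧
    ∀ i : Fin d, (i : ℕ) < d - 1 → x i = y i

/-- The dense-Cantor construction `𝓔` is `(Δ_n)_n`-dense: for all sufficiently large `n` and
every `Q ∈ 𝓔 n`, every vertical line segment contained in `Q \ ⋃ 𝓔 (n+1)` has diameter at most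
`Δ (n+1) * diam Q`. -/
def IsDeltaDense {d : ℕ} (Δ : ℕ → ℝ) (𝓔 : ℕ → Set (Set (EuclideanSpace ℝ (Fin d)))) : Prop :=
  ∃ n₀ : ℕ, ∀ n, n₀ ≤ n → ∀ Q ∈ 𝓔 n, ∀ A : Set (EuclideanSpace ℝ (Fin d)),
    IsVerticalSeg A → A ⊆ Q \ ⋃₀ 𝓔 (n + 1) →
      Metric.diam A ≤ Δ (n + 1) * Metric.diam Q

/-- The dyadic cube of level `k` in `[0,1]^d` with address `a`. -/
def dyCube (d k : ℕ) (a : Fin d → Fin (2 ^ k)) : Set (EuclideanSpace ℝ (Fin d)) :=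
  cube (fun i => (a i : ℝ) / 2 ^ k) (((2 : ℝ) ^ k)⁻¹)

/-- Lower corner of the level-`n` `N`-adic cube of `[0,1]^d` with address word `w`. -/
def fatCorner (d N : ℕ) {n : ℕ} (w : Fin n → Fin d → Fin N) : Fin d → ℝ :=
  fun i => ∑ j : Fin n, ((N : ℝ) ^ (j.val + 1))⁻¹ * (w j i : ℝ)

/-- In fractal percolation with retention coins `X`, the cube with address word `w` survives if
all of its ancestors (including itself) are retained. -/
def FatSurvives {Ω : Type*} {d N : ℕ} (X : ∀ n : ℕ, (Fin n → Fin d → Fin N) → Ω → Bool)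
    (ω : Ω) {n : ℕ} (w : Fin n → Fin d → Fin N) : Prop :=
  ∀ m : ℕ, ∀ h : m ≤ n, 1 ≤ m → X m (fun j => w (Fin.castLE h j)) ω = true

/-- The fractal percolation limit set determined by the retention coins `X` at sample `ω`:
the intersection over `n` of the unions of surviving level-`n` `N`-adic cubes. -/
def fatPerc {Ω : Type*} (d N : ℕ) (X : ∀ n : ℕ, (Fin n → Fin d → Fin N) → Ω → Bool)
    (ω : Ω) : Set (EuclideanSpace ℝ (Fin d)) :=
  ⋂ n : ℕ, ⋃ w : Fin n → Fin d → Fin N, ⋃ (_ : FatSurvives X ω w),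
    cube (fatCorner d N w) (((N : ℝ) ^ n)⁻¹)

/-- Lower corner of the level-`n` cube with address word `w` in the subdivision scheme where the
level-`j` cubes have side `denseSide N j`. -/
def denseCorner (d : ℕ) (N : ℕ → ℕ) {n : ℕ}
    (w : (j : Fin n) → Fin d → Fin (N (j.val + 1))) : Fin d → ℝ :=
  fun i => ∑ j : Fin n, denseSide N (j.val + 1) * (w j i : ℝ)

/-- Survival of the cube with address word `w` in dense fractal percolation with coins `X`. -/
def DenseSurvives {Ω : Type*} {d : ℕ} {N : ℕ → ℕ}
    (X : ∀ n : ℕ, ((j : Fin n) → Fin d → Fin (N (j.val + 1))) → Ω → Bool) (ω : Ω) {n : ℕ}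
    (w : (j : Fin n) → Fin d → Fin (N (j.val + 1))) : Prop :=
  ∀ m : ℕ, ∀ h : m ≤ n, 1 ≤ m → X m (fun j => w (Fin.castLE h j)) ω = true

/-- The dense fractal percolation limit set determined by the retention coins `X` at `ω`. -/
def densePerc {Ω : Type*} (d : ℕ) (N : ℕ → ℕ)
    (X : ∀ n : ℕ, ((j : Fin n) → Fin d → Fin (N (j.val + 1))) → Ω → Bool) (ω : Ω) :
    Set (EuclideanSpace ℝ (Fin d)) :=
  ⋂ n : ℕ, ⋃ w : (j : Fin n) → Fin d → Fin (N (j.val + 1)), ⋃ (_ : DenseSurvives X ω w),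
    cube (denseCorner d N w) (denseSide N n)

/-- The function `g_N (s) = 1 - (1-s)^N - N s (1-s)^(N-1) + N^(-5)`. -/
def gFun (N : ℕ) (s : ℝ) : ℝ :=
  1 - (1 - s) ^ N - N * s * (1 - s) ^ (N - 1) + ((N : ℝ) ^ 5)⁻¹

end

/-! ### Dyadic cubes -/

/-- Dyadic cube of level `t` with integer address `z`. -/
def dyC {d : ℕ} (t : ℕ) (z : Fin d → ℤ) : Set (EuclideanSpace ℝ (Fin d)) :=
  cube (fun i => (z i : ℝ) / 2 ^ t) (1 / 2 ^ t)

/-- Ancestor `h` levels up. -/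
def dvZ {d : ℕ} (z : Fin d → ℤ) (h : ℕ) : Fin d → ℤ := fun i => z i / 2 ^ h

theorem dvZ_dvZ {d : ℕ} (z : Fin d → ℤ) (a b : ℕ) : dvZ (dvZ z a) b = dvZ z (a + b) := by
  funext i
  simp only [dvZ]
  rw [Int.ediv_ediv_of_nonneg (by positivity), pow_add]

theorem dvZ_zero {d : ℕ} (z : Fin d → ℤ) : dvZ z 0 = z := by
  funext i
  simp [dvZ]

theorem mem_dyC {d : ℕ} (t : ℕ) (z : Fin d → ℤ) (x : EuclideanSpace ℝ (Fin d)) :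
    x ∈ dyC t z ↔ ∀ i, (z i : ℝ) ≤ x i * 2 ^ t ∧ x i * 2 ^ t ≤ z i + 1 := by
  have h2 : (0 : ℝ) < 2 ^ t := by positivity
  simp only [dyC, cube, Set.mem_ofPred_eq]
  refine forall_congr' fun i => ?_
  rw [← add_div, div_le_iff₀ h2, le_div_iff₀ h2]

theorem dvZ_bounds (a : ℤ) (h : ℕ) :
    ((a / 2 ^ h : ℤ) : ℝ) * 2 ^ h ≤ a ∧ (a : ℝ) + 1 ≤ (((a / 2 ^ h : ℤ) : ℝ) + 1) * 2 ^ h := by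
  have h2 : (0 : ℤ) < 2 ^ h := by positivity
  have h1 := Int.ediv_mul_le a (ne_of_gt h2)
  have h3 := Int.lt_ediv_add_one_mul_self a h2
  constructor
  · exact_mod_cast h1
  · have : a + 1 ≤ (a / 2 ^ h + 1) * 2 ^ h := h3
    exact_mod_cast this

theorem dyC_subset {d : ℕ} (t h : ℕ) (z : Fin d → ℤ) : dyC (t + h) z ⊆ dyC t (dvZ z h) := by
  intro x hx
  rw [mem_dyC] at hx ⊢
  intro i
  obtain ⟨h1, h2⟩ := hx i
  obtain ⟨h3, h4⟩ := dvZ_bounds (z i) h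
  have hp : (0 : ℝ) < 2 ^ h := by positivity
  rw [pow_add, ← mul_assoc] at h1 h2
  simp only [dvZ]
  constructor
  · exact le_of_mul_le_mul_right (h3.trans h1) hp
  · exact le_of_mul_le_mul_right (h2.trans h4) hp

theorem cube_inj {d : ℕ} {c c' : Fin d → ℝ} {l : ℝ} (hl : 0 ≤ l) (h : cube c l = cube c' l) :
    c = c' := by
  have h1 : (WithLp.toLp 2 c : EuclideanSpace ℝ (Fin d)) ∈ cube c' l := by
    rw [← h]; intro i; simp [hl]
  have h2 : (WithLp.toLp 2 c' : EuclideanSpace ℝ (Fin d)) ∈ cube c l := by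
    rw [h]; intro i; simp [hl]
  funext i
  exact le_antisymm (h2 i).1 (h1 i).1

theorem dyC_inj {d : ℕ} {t : ℕ} {z w : Fin d → ℤ} (h : dyC t z = dyC t w) : z = w := by
  have := cube_inj (by positivity) h
  funext i
  have h1 : (z i : ℝ) / 2 ^ t = (w i : ℝ) / 2 ^ t := congrFun this i
  have h2 : (0 : ℝ) < 2 ^ t := by positivity
  rw [div_left_inj' h2.ne'] at h1
  exact_mod_cast h1

theorem dvZ_of_subset {d : ℕ} {t h : ℕ} {z w : Fin d → ℤ} (hs : dyC (t + h) w ⊆ dyC t z) :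
    dvZ w h = z := by
  have hp : (0 : ℝ) < 2 ^ h := by positivity
  have hpt : (0 : ℝ) < 2 ^ (t + h) := by positivity
  have h1 : (WithLp.toLp 2 (fun i => (w i : ℝ) / 2 ^ (t + h)) : EuclideanSpace ℝ (Fin d))
      ∈ dyC t z := by
    apply hs; rw [mem_dyC]; intro i; simp
  have h2 : (WithLp.toLp 2 (fun i => ((w i : ℝ) + 1) / 2 ^ (t + h)) : EuclideanSpace ℝ (Fin d))
      ∈ dyC t z := by
    apply hs; rw [mem_dyC]; intro i; simp
  rw [mem_dyC] at h1 h2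
  funext i
  have a1 := (h1 i).1
  have a2 := (h2 i).2
  simp only [pow_add] at a1 a2
  have e1 : (w i : ℝ) / (2 ^ t * 2 ^ h) * 2 ^ t = w i / 2 ^ h := by field_simp
  have e2 : ((w i : ℝ) + 1) / (2 ^ t * 2 ^ h) * 2 ^ t = (w i + 1) / 2 ^ h := by field_simp
  rw [e1, le_div_iff₀ hp] at a1
  rw [e2, div_le_iff₀ hp] at a2
  have b1 : z i * 2 ^ h ≤ w i := by exact_mod_cast a1
  have b2 : w i + 1 ≤ (z i + 1) * 2 ^ h := by exact_mod_cast a2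
  simp only [dvZ]
  have hz : (0 : ℤ) < 2 ^ h := by positivity
  apply le_antisymm
  · have : w i / 2 ^ h < z i + 1 := Int.ediv_lt_of_lt_mul hz (by linarith)
    omega
  · exact Int.le_ediv_of_mul_le hz b1

theorem dist_le_of_coord {d : ℕ} {x y : EuclideanSpace ℝ (Fin d)} {l : ℝ}
    (h : ∀ i, |x i - y i| ≤ l) : dist x y ≤ d * l := by
  rw [EuclideanSpace.dist_eq]
  have hs : ∑ i, dist (x i) (y i) ^ 2 ≤ (∑ i, dist (x i) (y i)) ^ 2 :=
    Finset.sum_sq_le_sq_sum_of_nonneg (fun i _ => dist_nonneg)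
  calc √(∑ i, dist (x i) (y i) ^ 2) ≤ √((∑ i, dist (x i) (y i)) ^ 2) := Real.sqrt_le_sqrt hs
    _ = ∑ i, dist (x i) (y i) := Real.sqrt_sq (Finset.sum_nonneg fun i _ => dist_nonneg)
    _ ≤ ∑ _i : Fin d, l := Finset.sum_le_sum fun i _ => by rw [Real.dist_eq]; exact h i
    _ = d * l := by simp

theorem coord_le_dist {d : ℕ} (x y : EuclideanSpace ℝ (Fin d)) (i : Fin d) :
    |x i - y i| ≤ dist x y := by
  rw [EuclideanSpace.dist_eq, ← Real.dist_eq]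
  apply Real.le_sqrt_of_sq_le
  exact Finset.single_le_sum (f := fun i => dist (x i) (y i) ^ 2) (fun i _ => by positivity)
    (Finset.mem_univ i)

theorem dyC_dist {d : ℕ} {t : ℕ} {z : Fin d → ℤ} {x y : EuclideanSpace ℝ (Fin d)}
    (hx : x ∈ dyC t z) (hy : y ∈ dyC t z) : dist x y ≤ d / 2 ^ t := by
  have := dist_le_of_coord (x := x) (y := y) (l := 1 / 2 ^ t) (fun i => by
    have h1 := hx i
    have h2 := hy i
    rw [abs_le]; constructor <;> linarith [h1.1, h1.2, h2.1, h2.2])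
  rwa [mul_one_div] at this

theorem dyC_isCompact {d : ℕ} (t : ℕ) (z : Fin d → ℤ) : IsCompact (dyC t z) := by
  apply Metric.isCompact_of_isClosed_isBounded
  · have : dyC t z = ⋂ i, {x : EuclideanSpace ℝ (Fin d) | (z i : ℝ) / 2 ^ t ≤ x i ∧
        x i ≤ (z i : ℝ) / 2 ^ t + 1 / 2 ^ t} := by
      ext x; simp [dyC, cube]
    rw [this]
    refine isClosed_iInter fun i => ?_
    have hcont : Continuous fun x : EuclideanSpace ℝ (Fin d) => x i := by fun_prop
    exact (isClosed_le continuous_const hcont).inter (isClosed_le hcont continuous_const)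
  · rw [Metric.isBounded_iff]
    exact ⟨d / 2 ^ t, fun x hx y hy => dyC_dist hx hy⟩

theorem dyC_nonempty {d : ℕ} (t : ℕ) (z : Fin d → ℤ) : (dyC t z).Nonempty := by
  refine ⟨WithLp.toLp 2 (fun i => (z i : ℝ) / 2 ^ t), ?_⟩
  rw [mem_dyC]; intro i; simp

/-! ### Facts about the construction -/

/-- Level exponents. -/
def KK (k : ℕ → ℕ) (n : ℕ) : ℕ := ∑ m ∈ Finset.Icc 1 n, k m

theorem KK_succ (k : ℕ → ℕ) (n : ℕ) : KK k (n + 1) = KK k n + k (n + 1) := by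
  simp [KK, Finset.sum_Icc_succ_top]

theorem KK_mono (k : ℕ → ℕ) : Monotone (KK k) :=
  monotone_nat_of_le_succ fun n => by rw [KK_succ]; omega

theorem denseSide_eq {N k : ℕ → ℕ} (hpow : ∀ n, 1 ≤ n → N n = 2 ^ k n) (n : ℕ) :
    denseSide N n = 1 / 2 ^ (KK k n) := by
  rw [denseSide, KK, ← Finset.prod_pow_eq_pow_sum, one_div, ← Finset.prod_inv_distrib]
  refine Finset.prod_congr rfl fun m hm => ?_
  rw [hpow m (Finset.mem_Icc.1 hm).1]; push_cast; rfl

/-- Addresses of cubes in the family `𝓔 n`. -/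
def ZZ {d : ℕ} (k : ℕ → ℕ) (𝓔 : ℕ → Set (Set (EuclideanSpace ℝ (Fin d)))) (n : ℕ) :
    Set (Fin d → ℤ) := {z | dyC (KK k n) z ∈ 𝓔 n}

/-- Nodes of level `t`. -/
def VV {d : ℕ} (k : ℕ → ℕ) (𝓔 : ℕ → Set (Set (EuclideanSpace ℝ (Fin d)))) (t : ℕ) :
    Set (Fin d → ℤ) := {z | ∃ n, t ≤ KK k n ∧ ∃ w ∈ ZZ k 𝓔 n, z = dvZ w (KK k n - t)}

section constr
variable {d : ℕ} {N k : ℕ → ℕ} {𝓔 : ℕ → Set (Set (EuclideanSpace ℝ (Fin d)))}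

theorem child_eq (hpow : ∀ n, 1 ≤ n → N n = 2 ^ k n) (n : ℕ) (z : Fin d → ℤ)
    (a : Fin d → Fin (N (n + 1))) :
    cube (childCorner (fun i => (z i : ℝ) / 2 ^ KK k n) (denseSide N n) (N (n + 1)) a)
      (denseSide N (n + 1)) = dyC (KK k (n + 1)) (fun i => z i * 2 ^ k (n + 1) + ((a i : ℕ) : ℤ)) := by
  rw [denseSide_eq hpow, denseSide_eq hpow, dyC]
  congr 1
  funext i
  simp only [childCorner]
  have : (N (n + 1) : ℝ) = 2 ^ k (n + 1) := by rw [hpow _ (by omega)]; push_cast; rfl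
  rw [this, KK_succ, pow_add]
  push_cast
  field_simp

theorem exists_address (hpow : ∀ n, 1 ≤ n → N n = 2 ^ k n) (h𝓔 : IsDenseCantorFamilies d N 𝓔)
    (n : ℕ) : ∀ Q ∈ 𝓔 n, ∃ z : Fin d → ℤ, (∀ i, 0 ≤ z i ∧ z i < 2 ^ KK k n) ∧
      Q = dyC (KK k n) z := by
  induction n with
  | zero =>
    intro Q hQ
    rw [h𝓔.1] at hQ
    refine ⟨fun _ => 0, by simp [KK], ?_⟩
    rw [hQ]
    simp [dyC, KK]
  | succ n ih =>
    intro Q' hQ'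
    obtain ⟨Q, hQ, hsub, c, hc, a, ha⟩ := h𝓔.2.1 n Q' hQ'
    obtain ⟨z, hz, hzQ⟩ := ih Q hQ
    have hcz : c = fun i => (z i : ℝ) / 2 ^ KK k n := by
      rw [hc, denseSide_eq hpow, dyC] at hzQ
      exact cube_inj (by positivity) hzQ
    refine ⟨_, ?_, by rw [ha, hcz, child_eq hpow]⟩
    intro i
    have h1 := hz i
    have h2 : ((a i : ℕ) : ℤ) < 2 ^ k (n + 1) := by
      have := (a i).2.trans_eq (hpow (n + 1) (by omega))
      exact_mod_cast this
    have hp : (0 : ℤ) < 2 ^ k (n + 1) := by positivity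
    have := h1.1
    constructor
    · positivity
    · rw [KK_succ, pow_add]
      have : (z i + 1) * 2 ^ k (n + 1) ≤ 2 ^ KK k n * 2 ^ k (n + 1) :=
        mul_le_mul_of_nonneg_right (by linarith [h1.2]) hp.le
      linarith

theorem ZZ_parent (hpow : ∀ n, 1 ≤ n → N n = 2 ^ k n) (h𝓔 : IsDenseCantorFamilies d N 𝓔)
    (n : ℕ) (w : Fin d → ℤ) (hw : w ∈ ZZ k 𝓔 (n + 1)) : dvZ w (k (n + 1)) ∈ ZZ k 𝓔 n := by
  obtain ⟨Q, hQ, hsub, -⟩ := h𝓔.2.1 n _ hw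
  obtain ⟨z, hz, rfl⟩ := exists_address hpow h𝓔 n Q hQ
  rw [KK_succ] at hsub
  rw [dvZ_of_subset hsub]
  exact hQ

theorem ZZ_child (hpow : ∀ n, 1 ≤ n → N n = 2 ^ k n) (h𝓔 : IsDenseCantorFamilies d N 𝓔)
    (n : ℕ) (z : Fin d → ℤ) (hz : z ∈ ZZ k 𝓔 n) :
    ∃ w ∈ ZZ k 𝓔 (n + 1), dvZ w (k (n + 1)) = z := by
  obtain ⟨Q, hQ, hsub⟩ := h𝓔.2.2 n _ hz
  obtain ⟨w, hw, rfl⟩ := exists_address hpow h𝓔 (n + 1) Q hQ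
  refine ⟨w, hQ, ?_⟩
  rw [KK_succ] at hsub
  exact dvZ_of_subset hsub

theorem ZZ_anc (hpow : ∀ n, 1 ≤ n → N n = 2 ^ k n) (h𝓔 : IsDenseCantorFamilies d N 𝓔)
    (n m : ℕ) (w : Fin d → ℤ) (hw : w ∈ ZZ k 𝓔 (n + m)) :
    dvZ w (KK k (n + m) - KK k n) ∈ ZZ k 𝓔 n := by
  induction m generalizing w with
  | zero => simpa [dvZ_zero] using hw
  | succ m ih =>
    have h1 := ih _ (ZZ_parent hpow h𝓔 (n + m) w hw)
    rw [dvZ_dvZ] at h1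
    have h2 := KK_mono k (show n ≤ n + m by omega)
    have : KK k (n + (m + 1)) - KK k n = k (n + m + 1) + (KK k (n + m) - KK k n) := by
      rw [← add_assoc, KK_succ]; omega
    rwa [this]

theorem VV_anc (t h : ℕ) (z : Fin d → ℤ) (hz : z ∈ VV k 𝓔 (t + h)) : dvZ z h ∈ VV k 𝓔 t := by
  obtain ⟨n, hn, w, hw, rfl⟩ := hz
  refine ⟨n, by omega, w, hw, ?_⟩
  rw [dvZ_dvZ]; congr 1; omega

theorem VV_ZZ (hpow : ∀ n, 1 ≤ n → N n = 2 ^ k n) (h𝓔 : IsDenseCantorFamilies d N 𝓔)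
    (n : ℕ) (z : Fin d → ℤ) (hz : z ∈ VV k 𝓔 (KK k n)) : z ∈ ZZ k 𝓔 n := by
  obtain ⟨m, hm, w, hw, rfl⟩ := hz
  rcases le_total n m with h | h
  · obtain ⟨j, rfl⟩ := Nat.exists_eq_add_of_le h
    exact ZZ_anc hpow h𝓔 n j w hw
  · have hK : KK k m = KK k n := le_antisymm (KK_mono k h) hm
    -- then walk down
    obtain ⟨j, rfl⟩ := Nat.exists_eq_add_of_le h
    have : ∀ j, KK k m = KK k (m + j) → w ∈ ZZ k 𝓔 (m + j) := by
      intro j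
      induction j with
      | zero => intro _; exact hw
      | succ j ih =>
        intro hj
        have h1 := KK_mono k (show m ≤ m + j by omega)
        have h2 := KK_succ k (m + j)
        rw [← add_assoc] at hj
        have h3 := ih (by omega)
        obtain ⟨w', hw', hd⟩ := ZZ_child hpow h𝓔 (m + j) w h3
        have : k (m + j + 1) = 0 := by omega
        rw [this, dvZ_zero] at hd
        rw [← hd]; exact hw'
    rw [← hK, Nat.sub_self, dvZ_zero]
    exact this j hK

theorem VV_point (hpow : ∀ n, 1 ≤ n → N n = 2 ^ k n) (h𝓔 : IsDenseCantorFamilies d N 𝓔)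
    (t : ℕ) (z : Fin d → ℤ) (hz : z ∈ VV k 𝓔 t) : ∃ p ∈ ⋂ n, ⋃₀ 𝓔 n, p ∈ dyC t z := by
  obtain ⟨n, hn, w, hw, rfl⟩ := hz
  choose! ch hch1 hch2 using ZZ_child hpow h𝓔
  let u : ℕ → (Fin d → ℤ) := fun m => Nat.rec w (fun j v => ch (n + j) v) m
  have hu : ∀ m, u m ∈ ZZ k 𝓔 (n + m) := by
    intro m
    induction m with
    | zero => exact hw
    | succ m ih => exact hch1 _ _ ih
  have hnest : ∀ m, dyC (KK k (n + (m + 1))) (u (m + 1)) ⊆ dyC (KK k (n + m)) (u m) := by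
    intro m
    have h1 : dvZ (u (m + 1)) (k (n + m + 1)) = u m := hch2 _ _ (hu m)
    rw [← add_assoc, KK_succ]
    have := dyC_subset (KK k (n + m)) (k (n + m + 1)) (u (m + 1))
    rwa [h1] at this
  obtain ⟨p, hp⟩ := IsCompact.nonempty_iInter_of_sequence_nonempty_isCompact_isClosed
    (fun m => dyC (KK k (n + m)) (u m)) hnest (fun m => dyC_nonempty _ _) (dyC_isCompact _ _)
    (fun m => (dyC_isCompact _ _).isClosed)
  rw [Set.mem_iInter] at hp
  refine ⟨p, ?_, ?_⟩
  · rw [Set.mem_iInter]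
    intro m
    have hu' := hu m
    rw [add_comm] at hu'
    have h1 := ZZ_anc hpow h𝓔 m n _ hu'
    refine ⟨_, h1, ?_⟩
    have h2 := hp m
    have h3 := KK_mono k (show m ≤ m + n by omega)
    have h4 := dyC_subset (KK k m) (KK k (m + n) - KK k m) (u m)
    rw [Nat.add_sub_cancel' h3, add_comm m n] at h4
    rw [add_comm m n]
    exact h4 h2
  · have h2 := hp 0
    have h4 := dyC_subset t (KK k n - t) w
    rw [Nat.add_sub_cancel' hn] at h4
    exact h4 h2

theorem VV_cover (hpow : ∀ n, 1 ≤ n → N n = 2 ^ k n) (h𝓔 : IsDenseCantorFamilies d N 𝓔)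
    (hk : ∀ t, ∃ n, t ≤ KK k n)
    (x : EuclideanSpace ℝ (Fin d)) (hx : x ∈ ⋂ n, ⋃₀ 𝓔 n) (t : ℕ) :
    ∃ z ∈ VV k 𝓔 t, x ∈ dyC t z := by
  obtain ⟨n, hn⟩ := hk t
  rw [Set.mem_iInter] at hx
  obtain ⟨Q, hQ, hxQ⟩ := hx n
  obtain ⟨w, hw, rfl⟩ := exists_address hpow h𝓔 n Q hQ
  refine ⟨_, ⟨n, hn, w, hQ, rfl⟩, ?_⟩
  have h4 := dyC_subset t (KK k n - t) w
  rw [Nat.add_sub_cancel' hn] at h4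
  exact h4 hxQ

theorem E_compact (hpow : ∀ n, 1 ≤ n → N n = 2 ^ k n) (h𝓔 : IsDenseCantorFamilies d N 𝓔) :
    IsCompact (⋂ n, ⋃₀ 𝓔 n) := by
  have hc : ∀ n, IsCompact (⋃₀ 𝓔 n) := by
    intro n
    apply Set.Finite.isCompact_sUnion
    · have : 𝓔 n ⊆ (fun z => dyC (KK k n) z) ''
          (Set.pi Set.univ (fun _ : Fin d => Set.Ico (0 : ℤ) (2 ^ KK k n))) := by
        intro Q hQ
        obtain ⟨w, hw, rfl⟩ := exists_address hpow h𝓔 n Q hQ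
        exact ⟨w, fun i _ => hw i, rfl⟩
      exact ((Set.Finite.pi' (fun _ => Set.finite_Ico _ _)).subset (by
        intro z hz i; exact hz i trivial)).image _ |>.subset this
    · intro Q hQ
      obtain ⟨w, hw, rfl⟩ := exists_address hpow h𝓔 n Q hQ
      exact dyC_isCompact _ _
  exact (hc 0).of_isClosed_subset (isClosed_iInter fun n => (hc n).isClosed)
    (Set.iInter_subset _ 0)

theorem VV_column (hpow : ∀ n, 1 ≤ n → N n = 2 ^ k n) (h𝓔 : IsDenseCantorFamilies d N 𝓔)
    {n₀ : ℕ}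
    (hden : ∀ n, n₀ ≤ n → ∀ Q ∈ 𝓔 n, ∀ A : Set (EuclideanSpace ℝ (Fin d)),
      IsVerticalSeg A → A ⊆ Q \ ⋃₀ 𝓔 (n + 1) →
      Metric.diam A ≤ Real.log (N (n + 1)) / (N (n + 1) : ℝ) * Metric.diam Q)
    (l : Fin d) (hl : (l : ℕ) = d - 1)
    (n t h g : ℕ) (hn : n₀ ≤ n) (ht : KK k n ≤ t) (ht' : t + h ≤ KK k (n + 1))
    (hg : (d * k (n + 1) + 1) * 2 ^ (t + h) < g * 2 ^ KK k (n + 1))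
    (a : Fin d → ℤ) (ha : dvZ a h ∈ VV k 𝓔 t) (c₀ : ℤ)
    (hc₀ : dvZ a h l * 2 ^ h ≤ c₀) (hc₁ : c₀ + g ≤ (dvZ a h l + 1) * 2 ^ h) :
    ∃ c, c₀ ≤ c ∧ c < c₀ + g ∧ Function.update a l c ∈ VV k 𝓔 (t + h) := by
  set K := KK k (n + 1) with hK
  obtain ⟨e, he⟩ := Nat.exists_eq_add_of_le ht'
  obtain ⟨b, hb⟩ := Nat.exists_eq_add_of_le ht
  have hgpos : 0 < g := by
    rcases Nat.eq_zero_or_pos g with h0 | h0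
    · simp [h0] at hg
    · exact h0
  have hg' : (((d : ℝ) * k (n + 1) + 1)) < g * 2 ^ e := by
    have h1 : (d * k (n + 1) + 1) * 2 ^ (t + h) < (g * 2 ^ e) * 2 ^ (t + h) := by
      calc _ < g * 2 ^ K := hg
        _ = _ := by rw [he, pow_add]; ring
    have h2 := lt_of_mul_lt_mul_right h1 (Nat.zero_le _)
    exact_mod_cast h2
  -- the cube of level n
  set w : Fin d → ℤ := dvZ a (h + b) with hw
  have hwV : w ∈ ZZ k 𝓔 n := by
    apply VV_ZZ hpow h𝓔
    rw [hb] at ha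
    have := VV_anc (k := k) (𝓔 := 𝓔) _ _ _ ha
    rwa [dvZ_dvZ] at this
  -- the segment
  have hP : (0 : ℝ) < 2 ^ K := by positivity
  have hPe : (0 : ℝ) < 2 ^ e := by positivity
  let base : Fin d → ℝ := fun i => ((a i : ℝ) * 2 ^ e + 1 / 2) / 2 ^ K
  let x : EuclideanSpace ℝ (Fin d) :=
    WithLp.toLp 2 (Function.update base l (((c₀ : ℝ) * 2 ^ e + 1 / 2) / 2 ^ K))
  let y : EuclideanSpace ℝ (Fin d) :=
    WithLp.toLp 2 (Function.update base l ((((c₀ : ℝ) + g) * 2 ^ e - 1 / 2) / 2 ^ K))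
  have hge : (1 : ℝ) ≤ g * 2 ^ e := by
    have h1 : (1 : ℝ) ≤ g := by exact_mod_cast hgpos
    have h2 : (1 : ℝ) ≤ 2 ^ e := one_le_pow₀ (by norm_num)
    nlinarith
  have hseg : IsVerticalSeg (segment ℝ x y) := by
    refine ⟨x, y, rfl, fun i hi => ?_⟩
    have : i ≠ l := by rintro rfl; omega
    simp [x, y, this]
  -- coordinates of points of the segment
  have hcoord : ∀ p ∈ segment ℝ x y, (∀ i, i ≠ l → p i * 2 ^ K = (a i : ℝ) * 2 ^ e + 1 / 2) ∧
      (c₀ : ℝ) * 2 ^ e + 1 / 2 ≤ p l * 2 ^ K ∧ p l * 2 ^ K ≤ ((c₀ : ℝ) + g) * 2 ^ e - 1 / 2 := by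
    rintro p ⟨u, v, hu, hv, huv, rfl⟩
    refine ⟨fun i hi => ?_, ?_, ?_⟩
    · simp only [PiLp.add_apply, PiLp.smul_apply, smul_eq_mul, x, y, Function.update_of_ne hi]
      rw [← add_mul, huv, one_mul]
      simp only [base]
      field_simp
    all_goals
      simp only [PiLp.add_apply, PiLp.smul_apply, smul_eq_mul, x, y, Function.update_self]
      have e1 : (u * (((c₀ : ℝ) * 2 ^ e + 1 / 2) / 2 ^ K) +
        v * ((((c₀ : ℝ) + g) * 2 ^ e - 1 / 2) / 2 ^ K)) * 2 ^ K =
        u * ((c₀ : ℝ) * 2 ^ e + 1 / 2) + v * (((c₀ : ℝ) + g) * 2 ^ e - 1 / 2) := by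
        field_simp
      rw [e1]
      have hu' : u = 1 - v := by linarith
      subst hu'
      nlinarith
  have hbd : ∀ i, (w i : ℝ) * 2 ^ (h + b) ≤ a i ∧ (a i : ℝ) + 1 ≤ (w i + 1) * 2 ^ (h + b) :=
    fun i => dvZ_bounds (a i) (h + b)
  have hKn : K = KK k n + (h + b + e) := by omega
  have hwl : (w l : ℝ) * 2 ^ (h + b) ≤ c₀ ∧ (c₀ : ℝ) + g ≤ (w l + 1) * 2 ^ (h + b) := by
    obtain ⟨h1, h2⟩ := dvZ_bounds (dvZ a h l) b
    have h3 : ((dvZ a h l / 2 ^ b : ℤ)) = w l := by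
      have := congrFun (dvZ_dvZ a h b) l
      exact this
    rw [h3] at h1 h2
    have hp : (0 : ℝ) < 2 ^ h := by positivity
    have h4 : (dvZ a h l : ℝ) * 2 ^ h ≤ c₀ := by exact_mod_cast hc₀
    have h5 : (c₀ : ℝ) + g ≤ (dvZ a h l + 1) * 2 ^ h := by exact_mod_cast hc₁
    rw [pow_add]
    constructor
    · nlinarith
    · nlinarith
  have hsub : segment ℝ x y ⊆ dyC (KK k n) w := by
    intro p hp
    obtain ⟨h1, h2, h3⟩ := hcoord p hp
    rw [mem_dyC]
    have key : ∀ i, (w i : ℝ) * 2 ^ (h + b) * 2 ^ e ≤ p i * 2 ^ K →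
      p i * 2 ^ K ≤ (w i + 1) * 2 ^ (h + b) * 2 ^ e →
      (w i : ℝ) ≤ p i * 2 ^ KK k n ∧ p i * 2 ^ KK k n ≤ w i + 1 := by
      intro i
      rw [mul_assoc, mul_assoc, ← pow_add, hKn, pow_add _ (KK k n), ← mul_assoc]
      intro h1 h2
      have hp : (0 : ℝ) < 2 ^ (h + b + e) := by positivity
      exact ⟨le_of_mul_le_mul_right h1 hp, le_of_mul_le_mul_right h2 hp⟩
    intro i
    apply key
    · by_cases hi : i = l
      · subst hi
        have := mul_le_mul_of_nonneg_right hwl.1 hPe.le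
        linarith
      · rw [h1 i hi]
        have := mul_le_mul_of_nonneg_right (hbd i).1 hPe.le
        linarith
    · by_cases hi : i = l
      · subst hi
        have := mul_le_mul_of_nonneg_right hwl.2 hPe.le
        linarith
      · rw [h1 i hi]
        have := mul_le_mul_of_nonneg_right (hbd i).2 hPe.le
        have h2e : (1 : ℝ) ≤ 2 ^ e := one_le_pow₀ (by norm_num)
        linarith
  have hnot : ¬ (segment ℝ x y ⊆ dyC (KK k n) w \ ⋃₀ 𝓔 (n + 1)) := by
    intro hcon
    have h1 := hden n hn _ hwV _ hseg hcon
    have h2 : dist x y ≤ Metric.diam (segment ℝ x y) :=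
      Metric.dist_le_diam_of_mem ((dyC_isCompact _ _).isBounded.subset hsub)
        (left_mem_segment ℝ x y) (right_mem_segment ℝ x y)
    have h3 : Metric.diam (dyC (KK k n) w) ≤ d / 2 ^ KK k n :=
      Metric.diam_le_of_forall_dist_le (by positivity) (fun p hp q hq => dyC_dist hp hq)
    have h4 := coord_le_dist x y l
    have h5 : |x l - y l| = (g * 2 ^ e - 1) / 2 ^ K := by
      simp only [x, y, Function.update_self]
      rw [abs_sub_comm, ← sub_div, abs_of_nonneg]
      · congr 1; ring
      · apply div_nonneg _ hP.le; linarith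
    have h6 : (N (n + 1) : ℝ) = 2 ^ k (n + 1) := by rw [hpow _ (by omega)]; push_cast; rfl
    have h7 : Real.log (N (n + 1)) / (N (n + 1) : ℝ) ≤ k (n + 1) / 2 ^ k (n + 1) := by
      rw [h6, Real.log_pow]
      have : Real.log 2 ≤ 1 := by linarith [Real.log_two_lt_d9]
      gcongr
      exact mul_le_of_le_one_right (by positivity) this
    have h8 : ((g : ℝ) * 2 ^ e - 1) / 2 ^ K ≤ ((k (n + 1) : ℝ) / 2 ^ k (n + 1)) * (d / 2 ^ KK k n) := by
      rw [← h5]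
      refine h4.trans (h2.trans (h1.trans ?_))
      exact mul_le_mul h7 h3 Metric.diam_nonneg (by positivity)
    have h9 : ((k (n + 1) : ℝ) / 2 ^ k (n + 1)) * (d / 2 ^ KK k n) = d * k (n + 1) / 2 ^ K := by
      rw [hK, KK_succ, pow_add]; field_simp
    rw [h9, div_le_div_iff_of_pos_right hP] at h8
    linarith
  obtain ⟨p, hp, hp2⟩ := Set.not_subset.1 hnot
  have hpU : p ∈ ⋃₀ 𝓔 (n + 1) := by
    by_contra hcon
    exact hp2 ⟨hsub hp, hcon⟩
  obtain ⟨Q, hQ, hpQ⟩ := hpU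
  obtain ⟨w', -, rfl⟩ := exists_address hpow h𝓔 (n + 1) Q hQ
  rw [mem_dyC] at hpQ
  obtain ⟨q1, q2, q3⟩ := hcoord p hp
  have hpz : (0 : ℤ) < 2 ^ e := by positivity
  have r1 : c₀ * 2 ^ e ≤ w' l := by
    have : (c₀ : ℝ) * 2 ^ e < w' l + 1 := by linarith [(hpQ l).2]
    have : c₀ * 2 ^ e < w' l + 1 := by exact_mod_cast this
    omega
  have r2 : w' l < (c₀ + g) * 2 ^ e := by
    have : (w' l : ℝ) < (c₀ + g) * 2 ^ e := by linarith [(hpQ l).1]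
    exact_mod_cast this
  refine ⟨w' l / 2 ^ e, Int.le_ediv_of_mul_le hpz r1, Int.ediv_lt_of_lt_mul hpz r2, ?_⟩
  refine ⟨n + 1, ht', w', hQ, ?_⟩
  have hsubE : KK k (n + 1) - (t + h) = e := by omega
  rw [hsubE]
  funext i
  by_cases hi : i = l
  · subst hi; simp [dvZ]
  · rw [Function.update_of_ne hi]
    have s1 : a i * 2 ^ e < w' i + 1 := by
      have : (a i : ℝ) * 2 ^ e < w' i + 1 := by linarith [(hpQ i).2, q1 i hi]
      exact_mod_cast this
    have s2 : w' i < (a i + 1) * 2 ^ e := by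
      have h2e : (1 : ℝ) ≤ 2 ^ e := one_le_pow₀ (by norm_num)
      have : (w' i : ℝ) < (a i + 1) * 2 ^ e := by linarith [(hpQ i).1, q1 i hi]
      exact_mod_cast this
    simp only [dvZ]
    apply le_antisymm
    · exact Int.le_ediv_of_mul_le hpz (by omega)
    · have := Int.ediv_lt_of_lt_mul hpz s2
      omega

end constr


/-! ### Choice of scales -/

theorem k_ge {k : ℕ → ℕ} (hk1 : 1 ≤ k 1) (hk : ∀ n, 1 ≤ n → k n < k (n + 1)) (n : ℕ) (hn : 1 ≤ n) :
    n ≤ k n := by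
  induction n, hn using Nat.le_induction with
  | base => exact hk1
  | succ n hn ih => have := hk n hn; omega

theorem eventually_sigma (d m q : ℕ) (A κ δ ε : ℝ) (hA : 0 < A) (hκ : 0 < κ) (hδ : 0 < δ)
    (hε : 0 < ε) :
    ∀ᶠ x : ℕ in atTop, A * ((d * x + 2 : ℕ) : ℝ) ^ q ≤ 2 ^ (κ * (⌊δ * x / 2⌋₊ : ℝ)) ∧
      (⌊δ * x / 2⌋₊ : ℝ) + m ≤ δ * x ∧ (m : ℝ) ≤ ε * x := by
  have hr : (1 : ℝ) < 2 ^ (κ * δ / 2) := Real.one_lt_rpow (by norm_num) (by positivity)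
  have ho := isLittleO_pow_const_const_pow_of_one_lt (R := ℝ) q hr
  have hc : (0 : ℝ) < 1 / (A * (d + 2) ^ q * 2 ^ κ) := by positivity
  have h1 := ho.bound hc
  have ht : Tendsto (fun x : ℕ => (x : ℝ)) atTop atTop := tendsto_natCast_atTop_atTop
  have h2 := ht.eventually_ge_atTop (2 * m / δ)
  have h3 := ht.eventually_ge_atTop (m / ε)
  have h4 := eventually_ge_atTop (1 : ℕ)
  filter_upwards [h1, h2, h3, h4] with x h1 h2 h3 h4
  have hx1 : (1 : ℝ) ≤ x := by exact_mod_cast h4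
  have hfl : δ * x / 2 < (⌊δ * x / 2⌋₊ : ℝ) + 1 := Nat.lt_floor_add_one _
  have hfl2 : (⌊δ * x / 2⌋₊ : ℝ) ≤ δ * x / 2 := Nat.floor_le (by positivity)
  refine ⟨?_, ?_, ?_⟩
  · rw [Real.norm_of_nonneg (by positivity), Real.norm_of_nonneg (by positivity)] at h1
    have e1 : ((2 : ℝ) ^ (κ * δ / 2)) ^ x = 2 ^ (κ * (δ * x / 2)) := by
      rw [← Real.rpow_natCast, ← Real.rpow_mul (by norm_num)]; congr 1; ring
    rw [e1, one_div, inv_mul_eq_div, le_div_iff₀ (by positivity)] at h1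
    have e2 : ((d * x + 2 : ℕ) : ℝ) ^ q ≤ (d + 2) ^ q * (x : ℝ) ^ q := by
      rw [← mul_pow]
      gcongr
      push_cast
      nlinarith
    have e3 : (2 : ℝ) ^ (κ * (δ * x / 2)) ≤ 2 ^ (κ * (⌊δ * x / 2⌋₊ : ℝ)) * 2 ^ κ := by
      rw [← Real.rpow_add (by norm_num)]
      apply Real.rpow_le_rpow_of_exponent_le (by norm_num)
      nlinarith
    have hp : (0 : ℝ) < 2 ^ κ := by positivity
    have e4 : (A * ((d * x + 2 : ℕ) : ℝ) ^ q) * 2 ^ κ ≤ 2 ^ (κ * (⌊δ * x / 2⌋₊ : ℝ)) * 2 ^ κ := by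
      calc (A * ((d * x + 2 : ℕ) : ℝ) ^ q) * 2 ^ κ ≤ (A * ((d + 2) ^ q * (x : ℝ) ^ q)) * 2 ^ κ := by
            gcongr
        _ = (x : ℝ) ^ q * (A * (d + 2) ^ q * 2 ^ κ) := by ring
        _ ≤ _ := h1.trans e3
    exact le_of_mul_le_mul_right e4 hp
  · rw [div_le_iff₀ hδ] at h2; linarith
  · rw [div_le_iff₀ hε] at h3; linarith

theorem scale_seq_aux {k : ℕ → ℕ} (hk1 : 1 ≤ k 1) (hk : ∀ n, 1 ≤ n → k n < k (n + 1))
    (d n₀ q : ℕ) (A κ ε : ℝ) (hA : 4 ≤ A) (hq : 1 ≤ q) (hκ : 0 < κ) (hκ1 : κ ≤ 1) (hε : 0 < ε) :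
    ∃ t h g ν : ℕ → ℕ, ∀ j, n₀ ≤ ν j ∧ KK k (ν j) ≤ t j ∧ t (j + 1) = t j + h j ∧
      t j + h j ≤ KK k (ν j + 1) ∧
      (d * k (ν j + 1) + 1) * 2 ^ (t j + h j) < g j * 2 ^ KK k (ν j + 1) ∧
      A * (g j : ℝ) ^ q ≤ 2 ^ (κ * (h j : ℝ)) ∧ (h j : ℝ) ≤ ε * t j ∧ 1 ≤ g j := by
  obtain ⟨m, hm⟩ : ∃ m : ℕ, A ≤ 2 ^ (κ * (m : ℝ)) := by
    obtain ⟨m, hm⟩ := pow_unbounded_of_one_lt A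
      (show (1 : ℝ) < 2 ^ κ from Real.one_lt_rpow (by norm_num) hκ)
    refine ⟨m, ?_⟩
    rw [Real.rpow_mul (by norm_num), Real.rpow_natCast]; exact hm.le
  set δ : ℝ := ε / (1 + ε) with hδ
  have hδ0 : 0 < δ := by positivity
  have hδε : ε * (1 - δ) = δ := by rw [hδ]; field_simp; ring
  have hδ1 : δ < 1 := by rw [hδ, div_lt_one (by positivity)]; linarith
  obtain ⟨k₁, hk₁⟩ := eventually_atTop.1
    (eventually_sigma d m q A κ δ ε (by linarith) hκ hδ0 hε)
  set σ : ℕ → ℕ := fun x => ⌊δ * x / 2⌋₊ with hσ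
  set n₁ := max n₀ (max k₁ 1) with hn₁
  have hkge : ∀ n, n₁ ≤ n → k₁ ≤ k n := fun n hn => by
    have := k_ge hk1 hk n (by omega); omega
  have hσpow : ∀ n, n₁ ≤ n → d * k n + 2 ≤ 2 ^ σ (k n) := by
    intro n hn
    have h1 := (hk₁ _ (hkge n hn)).1
    have h2 : (2 : ℝ) ^ (κ * (σ (k n) : ℝ)) ≤ 2 ^ (σ (k n) : ℝ) := by
      apply Real.rpow_le_rpow_of_exponent_le (by norm_num)
      have : (0 : ℝ) ≤ σ (k n) := by positivity
      nlinarith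
    rw [Real.rpow_natCast] at h2
    have h3 : (1 : ℝ) ≤ ((d * k n + 2 : ℕ) : ℝ) := by
      have : 1 ≤ d * k n + 2 := by omega
      exact_mod_cast this
    have h4 : ((d * k n + 2 : ℕ) : ℝ) ≤ ((d * k n + 2 : ℕ) : ℝ) ^ q := le_self_pow₀ h3 (by omega)
    have h5 : ((d * k n + 2 : ℕ) : ℝ) ≤ 2 ^ σ (k n) := by nlinarith
    exact_mod_cast h5
  have hσle : ∀ n, n₁ ≤ n → σ (k n) + m ≤ k n := by
    intro n hn
    have h1 := (hk₁ _ (hkge n hn)).2.1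
    have : (σ (k n) : ℝ) + m ≤ k n := h1.trans (by
      have : (0 : ℝ) ≤ k n := by positivity
      nlinarith)
    exact_mod_cast this
  let nxt : ℕ × ℕ → ℕ × ℕ := fun s =>
    if s.2 + m + σ (k (s.1 + 1)) ≤ KK k (s.1 + 1) then (s.1, s.2 + m) else (s.1 + 1, KK k (s.1 + 1))
  let st : ℕ → ℕ × ℕ := fun j => nxt^[j] (n₁, KK k n₁)
  have hst : ∀ j, st (j + 1) = nxt (st j) := fun j => Function.iterate_succ_apply' _ _ _
  have hinv : ∀ j, n₁ ≤ (st j).1 ∧ KK k (st j).1 ≤ (st j).2 ∧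
      (st j).2 + σ (k ((st j).1 + 1)) ≤ KK k ((st j).1 + 1) := by
    intro j
    induction j with
    | zero =>
      refine ⟨le_refl n₁, le_refl _, ?_⟩
      have := hσle (n₁ + 1) (by omega)
      show KK k n₁ + σ (k (n₁ + 1)) ≤ KK k (n₁ + 1)
      rw [KK_succ]; omega
    | succ j ih =>
      rw [hst]
      obtain ⟨i1, i2, i3⟩ := ih
      simp only [nxt]
      split_ifs with hc
      · exact ⟨i1, by simp only; omega, hc⟩
      · refine ⟨by simp only; omega, le_refl _, ?_⟩
        have := hσle ((st j).1 + 1 + 1) (by omega)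
        simp only
        rw [KK_succ k ((st j).1 + 1)]; omega
  refine ⟨fun j => (st j).2, fun j => (st (j + 1)).2 - (st j).2,
    fun j => if (st j).2 + m + σ (k ((st j).1 + 1)) ≤ KK k ((st j).1 + 1) then 1
      else d * k ((st j).1 + 1) + 2, fun j => (st j).1, fun j => ?_⟩
  obtain ⟨i1, i2, i3⟩ := hinv j
  beta_reduce
  set n := (st j).1 with hn
  set t := (st j).2 with ht
  have hkn1 := hkge (n + 1) (by omega)
  obtain ⟨a1, a2, a3⟩ := hk₁ _ hkn1
  have hKn1 := KK_succ k n
  have hKn1' : (KK k (n + 1) : ℝ) = KK k n + k (n + 1) := by exact_mod_cast hKn1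
  have hkpos : 0 < d * k (n + 1) + 2 := by omega
  have htk : (m : ℝ) ≤ ε * t := by
    have b1 := (hk₁ k₁ le_rfl).2.2
    have b2 : k₁ ≤ t := by
      have c1 := KK_mono k i1
      have c2 : k n₁ ≤ KK k n₁ := by
        have c3 : 1 ≤ n₁ := by omega
        obtain ⟨p, hp⟩ := Nat.exists_eq_add_of_le' c3
        rw [hp, KK_succ]; omega
      have := hkge n₁ le_rfl
      omega
    have b3 : (k₁ : ℝ) ≤ t := by exact_mod_cast b2
    nlinarith
  have hp2 := hσpow (n + 1) (by omega)
  by_cases hc : t + m + σ (k (n + 1)) ≤ KK k (n + 1)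
  · have e1 : (st (j + 1)).2 = t + m := by rw [hst]; simp only [nxt]; rw [if_pos hc]
    simp only [e1, if_pos hc, Nat.add_sub_cancel_left]
    refine ⟨by omega, i2, trivial, by omega, ?_, ?_, htk, le_rfl⟩
    · obtain ⟨u, hu⟩ := Nat.exists_eq_add_of_le hc
      rw [hu, one_mul, add_assoc (t + m), pow_add 2 (t + m), mul_comm]
      apply Nat.mul_lt_mul_of_pos_left _ (by positivity)
      rw [pow_add]
      have : 1 ≤ 2 ^ u := Nat.one_le_two_pow
      nlinarith
    · simpa using hm
  · have e1 : (st (j + 1)).2 = KK k (n + 1) := by rw [hst]; simp only [nxt]; rw [if_neg hc]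
    have htK : t ≤ KK k (n + 1) := by omega
    have hsub : t + (KK k (n + 1) - t) = KK k (n + 1) := by omega
    simp only [e1, if_neg hc, hsub]
    refine ⟨by omega, i2, trivial, le_rfl, ?_, ?_, ?_, by omega⟩
    · apply Nat.mul_lt_mul_of_pos_right (by omega) (by positivity)
    · refine a1.trans ?_
      apply Real.rpow_le_rpow_of_exponent_le (by norm_num)
      apply mul_le_mul_of_nonneg_left _ hκ.le
      have : σ (k (n + 1)) ≤ KK k (n + 1) - t := by omega
      exact_mod_cast this
    · rw [Nat.cast_sub htK]
      have b1 : (KK k (n + 1) : ℝ) ≤ t + m + σ (k (n + 1)) := by exact_mod_cast (not_le.1 hc).le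
      have b2 : (KK k (n + 1) : ℝ) - t ≤ δ * k (n + 1) := by
        have : (σ (k (n + 1)) : ℝ) + m ≤ δ * k (n + 1) := a2
        linarith
      have b3 : (k (n + 1) : ℝ) ≤ KK k (n + 1) := by
        rw [hKn1']; have : (0 : ℝ) ≤ KK k n := by positivity
        linarith
      have b4 : (KK k (n + 1) : ℝ) - t ≤ δ * KK k (n + 1) := b2.trans (by gcongr)
      calc (KK k (n + 1) : ℝ) - t ≤ δ * KK k (n + 1) := b4
        _ = ε * ((1 - δ) * KK k (n + 1)) := by rw [← mul_assoc, hδε]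
        _ ≤ ε * t := by
          apply mul_le_mul_of_nonneg_left _ hε.le
          linarith

theorem scale_seq {k : ℕ → ℕ} (hk1 : 1 ≤ k 1) (hk : ∀ n, 1 ≤ n → k n < k (n + 1))
    (d n₀ q : ℕ) (A κ ε : ℝ) (hκ : 0 < κ) (hε : 0 < ε) :
    ∃ t h g ν : ℕ → ℕ, ∀ j, n₀ ≤ ν j ∧ KK k (ν j) ≤ t j ∧ t (j + 1) = t j + h j ∧
      t j + h j ≤ KK k (ν j + 1) ∧
      (d * k (ν j + 1) + 1) * 2 ^ (t j + h j) < g j * 2 ^ KK k (ν j + 1) ∧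
      A * (g j : ℝ) ^ q ≤ 2 ^ (κ * (h j : ℝ)) ∧ (h j : ℝ) ≤ ε * t j ∧ 1 ≤ g j ∧
      4 * g j ≤ 2 ^ h j ∧ 2 ≤ h j := by
  obtain ⟨t, h, g, ν, H⟩ := scale_seq_aux hk1 hk d n₀ (max q 1) (max A 4) (min κ 1) ε
    (le_max_right _ _) (le_max_right _ _) (lt_min hκ one_pos) (min_le_right _ _) hε
  refine ⟨t, h, g, ν, fun j => ?_⟩
  obtain ⟨h1, h2, h3, h4, h5, h6, h7, h8⟩ := H j
  have hg1 : (1 : ℝ) ≤ g j := by exact_mod_cast h8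
  have hh : (0 : ℝ) ≤ h j := by positivity
  have h9 : 4 * g j ≤ 2 ^ h j := by
    have a1 : (g j : ℝ) ≤ (g j : ℝ) ^ (max q 1) :=
      le_self_pow₀ hg1 (by have := le_max_right q 1; omega)
    have a2 : (2 : ℝ) ^ (min κ 1 * (h j : ℝ)) ≤ 2 ^ (h j : ℝ) := by
      apply Real.rpow_le_rpow_of_exponent_le (by norm_num)
      have := min_le_right κ 1
      nlinarith
    rw [Real.rpow_natCast] at a2
    have a3 : (4 : ℝ) * g j ≤ max A 4 * (g j : ℝ) ^ (max q 1) :=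
      mul_le_mul (le_max_right _ _) a1 (by positivity) (by positivity)
    have : (4 : ℝ) * g j ≤ 2 ^ h j := a3.trans (h6.trans a2)
    exact_mod_cast this
  refine ⟨h1, h2, h3, h4, h5, ?_, h7, h8, h9, ?_⟩
  · calc A * (g j : ℝ) ^ q ≤ max A 4 * (g j : ℝ) ^ (max q 1) := by
          apply mul_le_mul (le_max_left _ _) (pow_le_pow_right₀ hg1 (le_max_left _ _))
            (by positivity) (by positivity)
      _ ≤ _ := h6
      _ ≤ _ := by
        apply Real.rpow_le_rpow_of_exponent_le (by norm_num)
        gcongr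
        exact min_le_left _ _
  · by_contra hcon
    have : h j = 0 ∨ h j = 1 := by omega
    rcases this with h0 | h0 <;> rw [h0] at h9 <;> omega


/-! ### Quasisymmetry estimates -/

section qs
variable {d : ℕ} {Y : Type*} [MetricSpace Y]

theorem eta_le {β u c : ℝ} (hβ0 : 0 < β) (hβ1 : β ≤ 1) (hu : 0 ≤ u) (huc : u ≤ c) (hc : 1 ≤ c) :
    max (u ^ β) (u ^ (1 / β)) ≤ c ^ (1 / β) := by
  have hb : β ≤ 1 / β := by rw [le_div_iff₀ hβ0]; nlinarith
  apply max_le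
  · exact (Real.rpow_le_rpow hu huc hβ0.le).trans (Real.rpow_le_rpow_of_exponent_le hc hb)
  · exact Real.rpow_le_rpow hu huc (by positivity)

theorem eta_le' {β u c : ℝ} (hβ0 : 0 < β) (hβ1 : β ≤ 1) (hu : 0 ≤ u) (huc : u ≤ c) (hc : 1 ≤ c) :
    max (u ^ β) (u ^ (1 / β)) ≤ c ^ (1 / β) * u ^ β := by
  have hb : β ≤ 1 / β := by rw [le_div_iff₀ hβ0]; nlinarith
  have h1 : 1 ≤ c ^ (1 / β) := Real.one_le_rpow hc (by positivity)
  have h2 : 0 ≤ u ^ β := Real.rpow_nonneg hu _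
  apply max_le
  · nlinarith
  · rcases hu.eq_or_lt with h | h
    · rw [← h, Real.zero_rpow (by positivity), Real.zero_rpow hβ0.ne']; simp
    · have : u ^ (1 / β) = u ^ (1 / β - β) * u ^ β := by
        rw [← Real.rpow_add h]; congr 1; ring
      rw [this]
      apply mul_le_mul_of_nonneg_right _ h2
      exact (Real.rpow_le_rpow hu huc (by linarith)).trans
        (Real.rpow_le_rpow_of_exponent_le hc (by linarith))

/-- The power quasisymmetry inequality on `E`. -/
def QSI (C β : ℝ) (f : EuclideanSpace ℝ (Fin d) → Y) (E : Set (EuclideanSpace ℝ (Fin d))) : Prop :=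
  ∀ x ∈ E, ∀ y ∈ E, ∀ z ∈ E, x ≠ z →
    dist (f x) (f y) ≤ C * max ((dist x y / dist x z) ^ β) ((dist x y / dist x z) ^ (1 / β)) *
      dist (f x) (f z)

variable {C β : ℝ} {f : EuclideanSpace ℝ (Fin d) → Y} {E : Set (EuclideanSpace ℝ (Fin d))}

theorem QSI.le (hq : QSI C β f E) (hC : 0 < C) (hβ0 : 0 < β) (hβ1 : β ≤ 1)
    {x y z : EuclideanSpace ℝ (Fin d)}
    (hx : x ∈ E) (hy : y ∈ E) (hz : z ∈ E) {ρ c : ℝ} (hρ : 0 < ρ) (hρz : ρ ≤ dist x z)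
    (hc : 1 ≤ c) (hy2 : dist x y ≤ c * ρ) :
    dist (f x) (f y) ≤ C * c ^ (1 / β) * dist (f x) (f z) := by
  have hd : 0 < dist x z := hρ.trans_le hρz
  refine (hq x hx y hy z hz (dist_pos.1 hd)).trans ?_
  apply mul_le_mul_of_nonneg_right _ dist_nonneg
  apply mul_le_mul_of_nonneg_left _ hC.le
  refine eta_le hβ0 hβ1 (by positivity) ?_ hc
  rw [div_le_iff₀ hd]
  exact hy2.trans (by gcongr)

theorem QSI.le' (hq : QSI C β f E) (hC : 0 < C) (hβ0 : 0 < β) (hβ1 : β ≤ 1)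
    {x y z : EuclideanSpace ℝ (Fin d)}
    (hx : x ∈ E) (hy : y ∈ E) (hz : z ∈ E) {ρ c u : ℝ} (hρ : 0 < ρ) (hρz : ρ ≤ dist x z)
    (hc : 1 ≤ c) (hu : 0 ≤ u) (huc : u ≤ c) (hy2 : dist x y ≤ u * ρ) :
    dist (f x) (f y) ≤ C * c ^ (1 / β) * u ^ β * dist (f x) (f z) := by
  have hd : 0 < dist x z := hρ.trans_le hρz
  refine (hq x hx y hy z hz (dist_pos.1 hd)).trans ?_
  apply mul_le_mul_of_nonneg_right _ dist_nonneg
  rw [mul_assoc]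
  apply mul_le_mul_of_nonneg_left _ hC.le
  have h1 : dist x y / dist x z ≤ u := by
    rw [div_le_iff₀ hd]
    exact hy2.trans (by gcongr)
  refine (eta_le' hβ0 hβ1 (by positivity) (h1.trans huc) hc).trans ?_
  gcongr

theorem QSI.continuousOn (hq : QSI C β f E) (hβ0 : 0 < β) : ContinuousOn f E := by
  intro x hx
  by_cases hz : ∃ z ∈ E, x ≠ z
  · obtain ⟨z, hz, hxz⟩ := hz
    rw [ContinuousWithinAt, tendsto_iff_dist_tendsto_zero]
    have hcont : Continuous fun y : EuclideanSpace ℝ (Fin d) =>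
        C * max ((dist x y / dist x z) ^ β) ((dist x y / dist x z) ^ (1 / β)) *
      dist (f x) (f z) := by
      have h1 : Continuous fun y : EuclideanSpace ℝ (Fin d) => dist x y / dist x z := by fun_prop
      have h2 := h1.rpow_const (p := β) (fun _ => Or.inr hβ0.le)
      have h3 := h1.rpow_const (p := 1 / β) (fun _ => Or.inr (by positivity))
      exact ((h2.max h3).const_mul C).mul_const _
    have h0 := hcont.tendsto x
    have hb : 1 / β ≠ 0 := by positivity
    rw [dist_self, zero_div, Real.zero_rpow hβ0.ne', Real.zero_rpow hb, max_self, mul_zero,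
      zero_mul] at h0
    refine squeeze_zero' (Eventually.of_forall fun _ => dist_nonneg) ?_
      (h0.mono_left nhdsWithin_le_nhds)
    filter_upwards [self_mem_nhdsWithin] with y hy
    rw [dist_comm]
    exact hq x hx y hy z hz hxz
  · push Not at hz
    have : E ⊆ {x} := fun z hz' => (hz z hz').symm
    exact (continuousOn_singleton f x).mono this x hx

/-- Diameter of the image of a node. -/
noncomputable def DD (f : EuclideanSpace ℝ (Fin d) → Y) (E : Set (EuclideanSpace ℝ (Fin d))) (t : ℕ)
    (z : Fin d → ℤ) : ℝ := Metric.diam (f '' (E ∩ dyC t z))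

theorem DD_nonneg (t : ℕ) (z : Fin d → ℤ) : 0 ≤ DD f E t z := Metric.diam_nonneg

theorem le_DD (hB : Bornology.IsBounded (f '' E)) {t : ℕ} {z : Fin d → ℤ}
    {x y : EuclideanSpace ℝ (Fin d)}
    (hx : x ∈ E) (hx' : x ∈ dyC t z) (hy : y ∈ E) (hy' : y ∈ dyC t z) :
    dist (f x) (f y) ≤ DD f E t z :=
  Metric.dist_le_diam_of_mem (hB.subset (Set.image_mono Set.inter_subset_left))
    ⟨x, ⟨hx, hx'⟩, rfl⟩ ⟨y, ⟨hy, hy'⟩, rfl⟩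

theorem DD_le {t : ℕ} {z : Fin d → ℤ} {B : ℝ} (hB : 0 ≤ B)
    (h : ∀ x ∈ E, x ∈ dyC t z → ∀ y ∈ E, y ∈ dyC t z → dist (f x) (f y) ≤ B) :
    DD f E t z ≤ B := by
  apply Metric.diam_le_of_forall_dist_le hB
  rintro _ ⟨x, ⟨hx, hx'⟩, rfl⟩ _ ⟨y, ⟨hy, hy'⟩, rfl⟩
  have hres := h x hx hx' y hy hy'
  exact hres

/-- Nodes of level `t` are thick. -/
def Thick (E : Set (EuclideanSpace ℝ (Fin d))) (V : ℕ → Set (Fin d → ℤ)) (t : ℕ) : Prop :=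
  ∀ z ∈ V t, ∃ p ∈ E, ∃ q ∈ E, p ∈ dyC t z ∧ q ∈ dyC t z ∧ 1 / (4 * 2 ^ t) ≤ dist p q

variable {V : ℕ → Set (Fin d → ℤ)}

theorem Thick.far {t : ℕ} (hT : Thick E V t) {z : Fin d → ℤ} (hz : z ∈ V t)
    (x : EuclideanSpace ℝ (Fin d)) : ∃ r ∈ E, r ∈ dyC t z ∧ 1 / (8 * 2 ^ t) ≤ dist x r := by
  obtain ⟨p, hp, q, hq, hp', hq', hd⟩ := hT z hz
  by_contra hcon
  push Not at hcon
  have h1 := hcon p hp hp'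
  have h2 := hcon q hq hq'
  have h3 := dist_triangle_left p q x
  have h4 : (1 : ℝ) / (4 * 2 ^ t) = 1 / (8 * 2 ^ t) + 1 / (8 * 2 ^ t) := by field_simp; norm_num
  linarith

theorem DD_child (hd : 1 ≤ d) (hq : QSI C β f E) (hC : 0 < C) (hβ0 : 0 < β) (hβ1 : β ≤ 1)
    (hB : Bornology.IsBounded (f '' E))
    {t h : ℕ} (hT : Thick E V t) {z : Fin d → ℤ} (hz : dvZ z h ∈ V t) :
    DD f E (t + h) z ≤ C * (8 * d) ^ (1 / β) * (8 * d) ^ β * 2 ^ (-(β * h)) * DD f E t (dvZ z h) := by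
  have hd' : (1 : ℝ) ≤ d := by exact_mod_cast hd
  have hDn := DD_nonneg (f := f) (E := E) t (dvZ z h)
  refine DD_le (by positivity) fun x hx hx' y hy hy' => ?_
  obtain ⟨r, hr, hr', hrd⟩ := hT.far hz x
  have h2h : (1 : ℝ) ≤ 2 ^ h := one_le_pow₀ (by norm_num)
  have hdist := dyC_dist hx' hy'
  have key := hq.le' hC hβ0 hβ1 hx hy hr (ρ := 1 / (8 * 2 ^ t)) (c := 8 * d) (u := 8 * d * (2 ^ h)⁻¹)
    (by positivity) hrd (by linarith) (by positivity)
    (mul_le_of_le_one_right (by positivity) (inv_le_one_of_one_le₀ h2h))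
    (by refine hdist.trans (le_of_eq ?_); rw [pow_add]; field_simp)
  have e1 : (8 * (d : ℝ) * (2 ^ h)⁻¹) ^ β = (8 * d) ^ β * 2 ^ (-(β * h)) := by
    rw [Real.mul_rpow (by positivity) (by positivity)]
    congr 1
    rw [← Real.rpow_natCast, ← Real.rpow_neg (by norm_num), ← Real.rpow_mul (by norm_num)]
    congr 1; ring
  rw [e1] at key
  refine key.trans ?_
  rw [← mul_assoc]
  exact mul_le_mul_of_nonneg_left (le_DD hB hx (dyC_subset _ _ _ hx') hr hr') (by positivity)

/-- Column property for a step from level `t` to level `t + h` with gap `g`. -/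
def ColP (V : ℕ → Set (Fin d → ℤ)) (l : Fin d) (t h g : ℕ) : Prop :=
  ∀ a : Fin d → ℤ, dvZ a h ∈ V t → ∀ c₀ : ℤ, dvZ a h l * 2 ^ h ≤ c₀ →
    c₀ + g ≤ (dvZ a h l + 1) * 2 ^ h →
    ∃ c, c₀ ≤ c ∧ c < c₀ + g ∧ Function.update a l c ∈ V (t + h)

theorem ediv_eq_of_mem {c z : ℤ} {h : ℕ} (h1 : z * 2 ^ h ≤ c) (h2 : c < (z + 1) * 2 ^ h) :
    c / 2 ^ h = z := by
  have hp : (0 : ℤ) < 2 ^ h := by positivity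
  apply le_antisymm
  · have := Int.ediv_lt_of_lt_mul hp h2; omega
  · exact Int.le_ediv_of_mul_le hp h1

theorem mem_of_ediv_eq {c z : ℤ} {h : ℕ} (h1 : c / 2 ^ h = z) :
    z * 2 ^ h ≤ c ∧ c < (z + 1) * 2 ^ h := by
  have hp : (0 : ℤ) < 2 ^ h := by positivity
  subst h1
  exact ⟨Int.ediv_mul_le c hp.ne', Int.lt_ediv_add_one_mul_self c hp⟩

theorem dvZ_update {a : Fin d → ℤ} {h : ℕ} {l : Fin d} {c : ℤ}
    (h1 : dvZ a h l * 2 ^ h ≤ c) (h2 : c < (dvZ a h l + 1) * 2 ^ h) :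
    dvZ (Function.update a l c) h = dvZ a h := by
  funext i
  by_cases hi : i = l
  · subst hi
    show Function.update a i c i / 2 ^ h = _
    rw [Function.update_self]
    exact ediv_eq_of_mem h1 h2
  · simp [dvZ, Function.update_of_ne hi]

theorem update_dist_lower {t : ℕ} {a : Fin d → ℤ} {l : Fin d} {c₁ c₂ : ℤ}
    {p q : EuclideanSpace ℝ (Fin d)} (hp : p ∈ dyC t (Function.update a l c₁))
    (hq : q ∈ dyC t (Function.update a l c₂)) : ((c₂ : ℝ) - c₁ - 1) / 2 ^ t ≤ dist p q := by
  rw [mem_dyC] at hp hq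
  have h1 := (hp l).2
  have h2 := (hq l).1
  rw [Function.update_self] at h1 h2
  have h3 := coord_le_dist p q l
  have h4 := (abs_le.1 h3).1
  have hpos : (0 : ℝ) < 2 ^ t := by positivity
  rw [div_le_iff₀ hpos]
  nlinarith

theorem update_dist_upper {t : ℕ} {a : Fin d → ℤ} {l : Fin d} {c₁ c₂ : ℤ} {g : ℕ}
    (hc : c₁ ≤ c₂) (hg : c₂ ≤ c₁ + g)
    {p q : EuclideanSpace ℝ (Fin d)} (hp : p ∈ dyC t (Function.update a l c₁))
    (hq : q ∈ dyC t (Function.update a l c₂)) : dist p q ≤ d * (((g : ℝ) + 1) / 2 ^ t) := by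
  rw [mem_dyC] at hp hq
  apply dist_le_of_coord
  intro i
  have hpos : (0 : ℝ) < 2 ^ t := by positivity
  have habs : |p i - q i| * 2 ^ t = |p i * 2 ^ t - q i * 2 ^ t| := by
    rw [← sub_mul, abs_mul, abs_of_pos hpos]
  rw [le_div_iff₀ hpos, habs]
  obtain ⟨h1, h2⟩ := hp i
  obtain ⟨h3, h4⟩ := hq i
  have hc' : (c₁ : ℝ) ≤ c₂ := by exact_mod_cast hc
  have hg' : (c₂ : ℝ) ≤ c₁ + g := by exact_mod_cast hg
  have hg0 : (0 : ℝ) ≤ g := by positivity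
  by_cases hi : i = l
  · subst hi
    rw [Function.update_self] at h1 h2 h3 h4
    rw [abs_le]; constructor <;> linarith
  · rw [Function.update_of_ne hi] at h1 h2 h3 h4
    rw [abs_le]; constructor <;> linarith

/-- bottom and top entries of a column -/
theorem ColP.ends {l : Fin d} {t h g : ℕ} (hcol : ColP V l t h g) (hg : 1 ≤ g)
    (h4 : 4 * g ≤ 2 ^ h) (a : Fin d → ℤ) (ha : dvZ a h ∈ V t) :
    ∃ c₁ c₂, dvZ a h l * 2 ^ h ≤ c₁ ∧ c₁ < c₂ ∧ c₂ < (dvZ a h l + 1) * 2 ^ h ∧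
      Function.update a l c₁ ∈ V (t + h) ∧ Function.update a l c₂ ∈ V (t + h) ∧
      (2 : ℝ) ^ h / 2 ≤ (c₂ : ℝ) - c₁ - 1 := by
  have h4' : 4 * (g : ℤ) ≤ 2 ^ h := by exact_mod_cast h4
  have hg' : 1 ≤ (g : ℤ) := by exact_mod_cast hg
  obtain ⟨c₁, p1, p2, p3⟩ := hcol a ha (dvZ a h l * 2 ^ h) le_rfl (by nlinarith)
  obtain ⟨c₂, q1, q2, q3⟩ := hcol a ha ((dvZ a h l + 1) * 2 ^ h - g) (by nlinarith) (by linarith)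
  refine ⟨c₁, c₂, p1, by linarith, by linarith, p3, q3, ?_⟩
  have : 2 ^ h ≤ 2 * (c₂ - c₁ - 1) := by linarith
  have : ((2 : ℝ) ^ h) ≤ 2 * (c₂ - c₁ - 1) := by exact_mod_cast this
  linarith

theorem ColP.thick {l : Fin d} {t h g : ℕ} (hcol : ColP V l t h g) (hg : 1 ≤ g)
    (h4 : 4 * g ≤ 2 ^ h) (hpt : ∀ t, ∀ z ∈ V t, ∃ p ∈ E, p ∈ dyC t z) : Thick E V t := by
  intro z hz
  let a : Fin d → ℤ := fun i => z i * 2 ^ h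
  have hp : (0 : ℤ) < 2 ^ h := by positivity
  have ha : dvZ a h = z := by
    funext i; simp [dvZ, a]
  obtain ⟨c₁, c₂, h1, h2, h3, hv1, hv2, hd⟩ := hcol.ends hg h4 a (by rwa [ha])
  obtain ⟨p, hpE, hp⟩ := hpt _ _ hv1
  obtain ⟨q, hqE, hq⟩ := hpt _ _ hv2
  refine ⟨p, hpE, q, hqE, ?_, ?_, ?_⟩
  · have := dyC_subset t h _ hp
    rwa [dvZ_update h1 (by linarith), ha] at this
  · have := dyC_subset t h _ hq
    rwa [dvZ_update (by linarith) h3, ha] at this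
  · refine le_trans ?_ (update_dist_lower hp hq)
    calc (1 : ℝ) / (4 * 2 ^ t) ≤ (2 ^ h / 2) / 2 ^ (t + h) := by
          rw [pow_add, div_le_div_iff₀ (by positivity) (by positivity)]
          have : (0 : ℝ) < 2 ^ t * 2 ^ h := by positivity
          nlinarith
      _ ≤ _ := by gcongr

theorem chain_le (H : Finset ℤ) (g : ℕ) (φ : ℤ → Y) (W : ℤ → ℝ) (hW : ∀ e, 0 ≤ W e)
    (hstep : ∀ e ∈ H, ∀ e' ∈ H, e < e' → e' ≤ e + g → dist (φ e) (φ e') ≤ W e)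
    (top : ℤ) (htop : top ∈ H)
    (hden : ∀ e ∈ H, e + g < top → ∃ e' ∈ H, e < e' ∧ e' ≤ e + g) :
    ∀ n : ℕ, ∀ c ∈ H, c < top → top ≤ c + n →
      dist (φ c) (φ top) ≤ ∑ e ∈ H.filter (fun e => c ≤ e), W e := by
  intro n
  induction n with
  | zero => intro c _ h1 h2; simp at h2; omega
  | succ n ih =>
    intro c hc h1 h2
    by_cases hg : top ≤ c + g
    · refine (hstep c hc top htop h1 hg).trans ?_
      exact Finset.single_le_sum (f := W) (fun e _ => hW e) (by simp [hc])
    · obtain ⟨e, he, e1, e2⟩ := hden c hc (by omega)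
      have h3 := ih e he (by omega) (by push_cast at h2; omega)
      have h4 := hstep c hc e he e1 e2
      refine (dist_triangle _ (φ e) _).trans ((add_le_add h4 h3).trans ?_)
      have hnot : c ∉ H.filter (fun x => e ≤ x) := by simp; omega
      rw [← Finset.sum_insert hnot]
      apply Finset.sum_le_sum_of_subset_of_nonneg
      · intro x hx
        simp only [Finset.mem_insert, Finset.mem_filter] at hx ⊢
        rcases hx with rfl | hx
        · exact ⟨hc, le_rfl⟩
        · exact ⟨hx.1, by omega⟩
      · intro i _ _; exact hW i

/-- Heights of nodes in a column. -/
noncomputable def colH (V : ℕ → Set (Fin d → ℤ)) (l : Fin d) (t h : ℕ) (a : Fin d → ℤ) : Finset ℤ :=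
  (Finset.Ico (dvZ a h l * 2 ^ h) ((dvZ a h l + 1) * 2 ^ h)).filter
    (fun c => Function.update a l c ∈ V (t + h))

theorem column_sum (hd : 1 ≤ d) (hq : QSI C β f E) (hC : 0 < C) (hβ0 : 0 < β) (hβ1 : β ≤ 1)
    (hB : Bornology.IsBounded (f '' E)) (hpt : ∀ t, ∀ z ∈ V t, ∃ p ∈ E, p ∈ dyC t z)
    {l : Fin d} {t h g : ℕ} (hcol : ColP V l t h g) (hg : 1 ≤ g)
    (h4 : 4 * g ≤ 2 ^ h) (hT : Thick E V (t + h)) (a : Fin d → ℤ) (ha : dvZ a h ∈ V t) :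
    DD f E t (dvZ a h) ≤ (2 * C * (4 * d) ^ (1 / β) * C * (16 * d) ^ (1 / β)) *
      (g : ℝ) ^ ⌈1 / β⌉₊ *
      ∑ c ∈ colH V l t h a, DD f E (t + h) (Function.update a l c) := by
  have hd' : (1 : ℝ) ≤ d := by exact_mod_cast hd
  have hg' : (1 : ℝ) ≤ g := by exact_mod_cast hg
  obtain ⟨c₁, c₂, h1, h2, h3, hv1, hv2, hdd⟩ := hcol.ends hg h4 a ha
  choose! φ hφE hφ using fun c (hc : Function.update a l c ∈ V (t + h)) => hpt _ _ hc
  have hmem : ∀ c, c ∈ colH V l t h a ↔ (dvZ a h l * 2 ^ h ≤ c ∧ c < (dvZ a h l + 1) * 2 ^ h) ∧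
      Function.update a l c ∈ V (t + h) := by
    intro c; simp [colH]
  set S := ∑ c ∈ colH V l t h a, DD f E (t + h) (Function.update a l c) with hS
  -- chain estimate
  have hchain : dist (f (φ c₁)) (f (φ c₂)) ≤ C * (8 * d * (g + 1)) ^ (1 / β) * S := by
    have := chain_le (colH V l t h a) g (fun c => f (φ c))
      (fun c => C * (8 * d * (g + 1)) ^ (1 / β) * DD f E (t + h) (Function.update a l c))
      (fun e => mul_nonneg (by positivity) (DD_nonneg _ _)) ?_ c₂
      ((hmem _).2 ⟨⟨by linarith, h3⟩, hv2⟩) ?_ (c₂ - c₁).toNat c₁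
      ((hmem _).2 ⟨⟨h1, by linarith⟩, hv1⟩) h2 (by omega)
    · refine this.trans ?_
      rw [← Finset.mul_sum]
      apply mul_le_mul_of_nonneg_left _ (by positivity)
      exact Finset.sum_le_sum_of_subset_of_nonneg (Finset.filter_subset _ _)
        (fun i _ _ => DD_nonneg _ _)
    · intro e he e' he' h5 h6
      rw [hmem] at he he'
      obtain ⟨r, hr, hr', hrd⟩ := hT.far he.2 (φ e)
      have hup := update_dist_upper h5.le h6 (hφ e he.2) (hφ e' he'.2)
      have := hq.le hC hβ0 hβ1 (hφE e he.2) (hφE e' he'.2) hr (ρ := 1 / (8 * 2 ^ (t + h)))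
        (c := 8 * d * (g + 1)) (by positivity) hrd (by nlinarith)
        (hup.trans (le_of_eq (by field_simp)))
      refine this.trans ?_
      apply mul_le_mul_of_nonneg_left _ (by positivity)
      exact le_DD hB (hφE e he.2) (hφ e he.2) hr hr'
    · intro e he heg
      rw [hmem] at he
      obtain ⟨c, k1, k2, k3⟩ := hcol a ha (e + 1) (by linarith) (by linarith)
      exact ⟨c, (hmem _).2 ⟨⟨by linarith, by linarith⟩, k3⟩, by linarith, by linarith⟩
  have hSn : 0 ≤ S := Finset.sum_nonneg fun i _ => DD_nonneg _ _
  -- parent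
  have hp1 : φ c₁ ∈ dyC t (dvZ a h) := by
    have := dyC_subset t h _ (hφ c₁ hv1)
    rwa [dvZ_update h1 (by linarith)] at this
  have hlow : 1 / (4 * 2 ^ t) ≤ dist (φ c₁) (φ c₂) := by
    refine le_trans ?_ (update_dist_lower (hφ c₁ hv1) (hφ c₂ hv2))
    calc (1 : ℝ) / (4 * 2 ^ t) ≤ (2 ^ h / 2) / 2 ^ (t + h) := by
          rw [pow_add, div_le_div_iff₀ (by positivity) (by positivity)]
          have : (0 : ℝ) < 2 ^ t * 2 ^ h := by positivity
          nlinarith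
      _ ≤ _ := by gcongr
  have hpar : DD f E t (dvZ a h) ≤ 2 * C * (4 * d) ^ (1 / β) * dist (f (φ c₁)) (f (φ c₂)) := by
    refine DD_le (by positivity) fun x hx hx' y hy hy' => ?_
    have key : ∀ x ∈ E, x ∈ dyC t (dvZ a h) →
        dist (f (φ c₁)) (f x) ≤ C * (4 * d) ^ (1 / β) * dist (f (φ c₁)) (f (φ c₂)) := by
      intro x hx hx'
      exact hq.le hC hβ0 hβ1 (hφE c₁ hv1) hx (hφE c₂ hv2) (ρ := 1 / (4 * 2 ^ t)) (by positivity)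
        hlow (by linarith) ((dyC_dist hp1 hx').trans (le_of_eq (by field_simp)))
    have k1 := key x hx hx'
    have k2 := key y hy hy'
    have := dist_triangle_left (f x) (f y) (f (φ c₁))
    linarith
  have hpow : (8 * d * ((g : ℝ) + 1)) ^ (1 / β) ≤ (16 * d) ^ (1 / β) * (g : ℝ) ^ ⌈1 / β⌉₊ := by
    calc (8 * d * ((g : ℝ) + 1)) ^ (1 / β) ≤ (16 * d * g) ^ (1 / β) := by
          apply Real.rpow_le_rpow (by positivity) _ (by positivity)
          nlinarith
      _ = (16 * d) ^ (1 / β) * (g : ℝ) ^ (1 / β) := Real.mul_rpow (by positivity) (by positivity)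
      _ ≤ _ := by
        apply mul_le_mul_of_nonneg_left _ (by positivity)
        rw [← Real.rpow_natCast]
        exact Real.rpow_le_rpow_of_exponent_le hg' (Nat.le_ceil _)
  calc DD f E t (dvZ a h) ≤ 2 * C * (4 * d) ^ (1 / β) * dist (f (φ c₁)) (f (φ c₂)) := hpar
    _ ≤ 2 * C * (4 * d) ^ (1 / β) * (C * ((16 * d) ^ (1 / β) * (g : ℝ) ^ ⌈1 / β⌉₊) * S) := by
        apply mul_le_mul_of_nonneg_left _ (by positivity)
        refine hchain.trans ?_
        gcongr
    _ = _ := by ring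

end qs


/-! ### Column power estimate and sums over children -/

theorem col_pow_ge (d : ℕ) (hd : 1 ≤ d) (s : ℝ) (hsd : s < d) (hs1 : 1 ≤ s)
    (B : ℝ) (hB : 0 < B) (q0 : ℕ) :
    ∃ A κ : ℝ, ∃ q : ℕ, 0 < κ ∧ ∀ (h g : ℕ) (D : ℝ) (H : Finset ℤ) (a : ℤ → ℝ), 1 ≤ g → 0 ≤ D →
      H.card ≤ 2 ^ h → (∀ i, 0 ≤ a i) → D ≤ B * (g : ℝ) ^ q0 * ∑ i ∈ H, a i →
      A * (g : ℝ) ^ q ≤ 2 ^ (κ * (h : ℝ)) →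
      D ^ s ≤ ((2 : ℝ) ^ h) ^ (d - 1) * ∑ i ∈ H, a i ^ s := by
  refine ⟨B ^ s, d - s, ⌈q0 * s⌉₊, by linarith, ?_⟩
  intro h g D H a hg hD hH ha hDs hA
  have hg' : (1 : ℝ) ≤ g := by exact_mod_cast hg
  have hs0 : 0 ≤ s := by linarith
  have hS : 0 ≤ ∑ i ∈ H, a i := Finset.sum_nonneg fun i _ => ha i
  have hT : 0 ≤ ∑ i ∈ H, a i ^ s := Finset.sum_nonneg fun i _ => Real.rpow_nonneg (ha i) _
  have h1 : (∑ i ∈ H, a i) ^ s ≤ (H.card : ℝ) ^ (s - 1) * ∑ i ∈ H, a i ^ s := by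
    have := Real.rpow_sum_le_const_mul_sum_rpow H a hs1
    simpa [abs_of_nonneg (ha _)] using this
  have h2 : (H.card : ℝ) ^ (s - 1) ≤ 2 ^ ((h : ℝ) * (s - 1)) := by
    rw [Real.rpow_mul (by norm_num), Real.rpow_natCast]
    apply Real.rpow_le_rpow (by positivity) _ (by linarith)
    exact_mod_cast hH
  have h3 : ((g : ℝ) ^ q0) ^ s ≤ (g : ℝ) ^ ⌈q0 * s⌉₊ := by
    rw [← Real.rpow_natCast, ← Real.rpow_mul (by linarith), ← Real.rpow_natCast]
    exact Real.rpow_le_rpow_of_exponent_le hg' (Nat.le_ceil _)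
  calc D ^ s ≤ (B * (g : ℝ) ^ q0 * ∑ i ∈ H, a i) ^ s := Real.rpow_le_rpow hD hDs hs0
    _ = B ^ s * ((g : ℝ) ^ q0) ^ s * (∑ i ∈ H, a i) ^ s := by
        rw [Real.mul_rpow (by positivity) hS, Real.mul_rpow hB.le (by positivity)]
    _ ≤ B ^ s * (g : ℝ) ^ ⌈q0 * s⌉₊ * (2 ^ ((h : ℝ) * (s - 1)) * ∑ i ∈ H, a i ^ s) := by
        have : (∑ i ∈ H, a i) ^ s ≤ 2 ^ ((h : ℝ) * (s - 1)) * ∑ i ∈ H, a i ^ s :=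
          h1.trans (by gcongr)
        gcongr
    _ ≤ 2 ^ ((d - s) * (h : ℝ)) * (2 ^ ((h : ℝ) * (s - 1)) * ∑ i ∈ H, a i ^ s) := by
        gcongr
    _ = _ := by
        rw [← mul_assoc, ← Real.rpow_add (by norm_num)]
        congr 1
        rw [← pow_mul, ← Real.rpow_natCast]
        congr 1
        push_cast [Nat.cast_sub hd]
        ring

theorem col_pow_lt (s : ℝ) (hs0 : 0 < s) (hs1 : s < 1)
    (B C₁ β : ℝ) (hB : 0 < B) (hC₁ : 0 < C₁) (hβ : 0 < β) (q0 : ℕ) :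
    ∃ A κ : ℝ, ∃ q : ℕ, 0 < κ ∧ ∀ (h g : ℕ) (D : ℝ) (H : Finset ℤ) (a : ℤ → ℝ), 0 ≤ D →
      (∀ i, 0 ≤ a i) → D ≤ B * (g : ℝ) ^ q0 * ∑ i ∈ H, a i →
      (∀ i ∈ H, a i ≤ C₁ * 2 ^ (-(β * (h : ℝ))) * D) →
      A * (g : ℝ) ^ q ≤ 2 ^ (κ * (h : ℝ)) →
      D ^ s ≤ ∑ i ∈ H, a i ^ s := by
  refine ⟨B * C₁ ^ (1 - s), β * (1 - s), q0, by nlinarith, ?_⟩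
  intro h g D H a hD ha hDs haD hA
  have hT : 0 ≤ ∑ i ∈ H, a i ^ s := Finset.sum_nonneg fun i _ => Real.rpow_nonneg (ha i) _
  rcases hD.eq_or_lt with h0 | h0
  · rw [← h0, Real.zero_rpow hs0.ne']; exact hT
  have h1 : ∑ i ∈ H, a i ≤ ∑ i ∈ H, a i ^ s * (C₁ * 2 ^ (-(β * (h : ℝ))) * D) ^ (1 - s) := by
    apply Finset.sum_le_sum
    intro i hi
    calc a i = a i ^ s * a i ^ (1 - s) := by
          rcases (ha i).eq_or_lt with h | h
          · rw [← h, Real.zero_rpow hs0.ne', zero_mul]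
          · rw [← Real.rpow_add h]; simp
      _ ≤ _ := by
          apply mul_le_mul_of_nonneg_left _ (Real.rpow_nonneg (ha i) _)
          exact Real.rpow_le_rpow (ha i) (haD i hi) (by linarith)
  rw [← Finset.sum_mul] at h1
  have e1 : (C₁ * 2 ^ (-(β * (h : ℝ))) * D) ^ (1 - s) =
      C₁ ^ (1 - s) * 2 ^ (-(β * (1 - s) * (h : ℝ))) * D ^ (1 - s) := by
    rw [Real.mul_rpow (by positivity) hD, Real.mul_rpow hC₁.le (by positivity),
      ← Real.rpow_mul (by norm_num)]
    congr 3; ring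
  rw [e1] at h1
  have hDp : 0 < D ^ (1 - s) := Real.rpow_pos_of_pos h0 _
  have e2 : D = D ^ s * D ^ (1 - s) := by rw [← Real.rpow_add h0]; simp
  have h2p : (0 : ℝ) < 2 ^ (β * (1 - s) * (h : ℝ)) := by positivity
  have h3 : D ^ s * D ^ (1 - s) ≤ (∑ i ∈ H, a i ^ s) * D ^ (1 - s) := by
    rw [← e2]
    calc D ≤ B * (g : ℝ) ^ q0 * ((∑ i ∈ H, a i ^ s) * (C₁ ^ (1 - s) * 2 ^ (-(β * (1 - s) * (h : ℝ))) *
          D ^ (1 - s))) := hDs.trans (by gcongr)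
      _ = (B * C₁ ^ (1 - s) * (g : ℝ) ^ q0) * 2 ^ (-(β * (1 - s) * (h : ℝ))) *
          ((∑ i ∈ H, a i ^ s) * D ^ (1 - s)) := by ring
      _ ≤ 2 ^ (β * (1 - s) * (h : ℝ)) * 2 ^ (-(β * (1 - s) * (h : ℝ))) *
          ((∑ i ∈ H, a i ^ s) * D ^ (1 - s)) := by gcongr
      _ = _ := by rw [← Real.rpow_add (by norm_num)]; simp
  exact le_of_mul_le_mul_right h3 hDp

theorem col_pow (d : ℕ) (hd : 1 ≤ d) (s : ℝ) (hs0 : 0 < s) (hsd : s < d) (hs1 : 2 ≤ d → 1 ≤ s)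
    (B C₁ β : ℝ) (hB : 0 < B) (hC₁ : 0 < C₁) (hβ : 0 < β) (q0 : ℕ) :
    ∃ A κ : ℝ, ∃ q : ℕ, 0 < κ ∧ ∀ (h g : ℕ) (D : ℝ) (H : Finset ℤ) (a : ℤ → ℝ), 1 ≤ g → 0 ≤ D →
      H.card ≤ 2 ^ h → (∀ i, 0 ≤ a i) → D ≤ B * (g : ℝ) ^ q0 * ∑ i ∈ H, a i →
      (∀ i ∈ H, a i ≤ C₁ * 2 ^ (-(β * (h : ℝ))) * D) →
      A * (g : ℝ) ^ q ≤ 2 ^ (κ * (h : ℝ)) →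
      D ^ s ≤ ((2 : ℝ) ^ h) ^ (d - 1) * ∑ i ∈ H, a i ^ s := by
  by_cases h : 1 ≤ s
  · obtain ⟨A, κ, q, hκ, H⟩ := col_pow_ge d hd s hsd h B hB q0
    exact ⟨A, κ, q, hκ, fun h g D Hs a h1 h2 h3 h4 h5 _ h7 => H h g D Hs a h1 h2 h3 h4 h5 h7⟩
  · have hd1 : d = 1 := by
      by_contra hne
      exact h (hs1 (by omega))
    subst hd1
    obtain ⟨A, κ, q, hκ, H⟩ := col_pow_lt s hs0 (not_le.1 h) B C₁ β hB hC₁ hβ q0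
    refine ⟨A, κ, q, hκ, fun h g D Hs a h1 h2 h3 h4 h5 h6 h7 => ?_⟩
    simpa using H h g D Hs a h2 h4 h5 h6 h7

/-- All potential descendants of `z` after `h` dyadic subdivisions. -/
noncomputable def boxZ {d : ℕ} (z : Fin d → ℤ) (h : ℕ) : Finset (Fin d → ℤ) :=
  Fintype.piFinset fun i => Finset.Ico (z i * 2 ^ h) ((z i + 1) * 2 ^ h)

theorem mem_boxZ {d : ℕ} {z a : Fin d → ℤ} {h : ℕ} : a ∈ boxZ z h ↔ dvZ a h = z := by
  simp only [boxZ, Fintype.mem_piFinset, Finset.mem_Ico]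
  constructor
  · intro H; funext i; exact ediv_eq_of_mem (H i).1 (H i).2
  · intro H i; exact mem_of_ediv_eq (congrFun H i)

theorem card_boxZ {d : ℕ} (z : Fin d → ℤ) (h : ℕ) : (boxZ z h).card = (2 ^ h) ^ d := by
  have : ∀ i, (Finset.Ico (z i * 2 ^ h) ((z i + 1) * 2 ^ h)).card = 2 ^ h := by
    intro i
    rw [Int.card_Ico]
    have : (z i + 1) * 2 ^ h - z i * 2 ^ h = ((2 ^ h : ℕ) : ℤ) := by push_cast; ring
    rw [this, Int.toNat_natCast]
  simp [boxZ, Fintype.card_piFinset, this]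

theorem column_double {d : ℕ} (z : Fin d → ℤ) (h : ℕ) (l : Fin d) (F : (Fin d → ℤ) → ℝ) :
    ∑ a ∈ boxZ z h, ∑ c ∈ Finset.Ico (z l * 2 ^ h) ((z l + 1) * 2 ^ h), F (Function.update a l c) =
      2 ^ h * ∑ a ∈ boxZ z h, F a := by
  set I := Finset.Ico (z l * 2 ^ h) ((z l + 1) * 2 ^ h) with hI
  have hcard : I.card = 2 ^ h := by
    rw [hI, Int.card_Ico]
    have : (z l + 1) * 2 ^ h - z l * 2 ^ h = ((2 ^ h : ℕ) : ℤ) := by push_cast; ring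
    rw [this, Int.toNat_natCast]
  have hm : ∀ a : Fin d → ℤ, ∀ c, a ∈ boxZ z h → c ∈ I →
      Function.update a l c ∈ boxZ z h ∧ a l ∈ I := by
    intro a c ha hc
    simp only [boxZ, Fintype.mem_piFinset] at ha ⊢
    refine ⟨fun i => ?_, ha l⟩
    by_cases hi : i = l
    · subst hi; rw [Function.update_self]; exact hc
    · rw [Function.update_of_ne hi]; exact ha i
  rw [← Finset.sum_product (boxZ z h) I (fun x => F (Function.update x.1 l x.2))]
  have : ∑ x ∈ boxZ z h ×ˢ I, F (Function.update x.1 l x.2) = ∑ x ∈ boxZ z h ×ˢ I, F x.1 := by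
    refine Finset.sum_nbij' (fun x => (Function.update x.1 l x.2, x.1 l))
      (fun x => (Function.update x.1 l x.2, x.1 l)) ?_ ?_ ?_ ?_ ?_
    · rintro ⟨a, c⟩ hx
      rw [Finset.mem_product] at hx ⊢
      exact hm a c hx.1 hx.2
    · rintro ⟨a, c⟩ hx
      rw [Finset.mem_product] at hx ⊢
      exact hm a c hx.1 hx.2
    · rintro ⟨a, c⟩ hx; simp
    · rintro ⟨a, c⟩ hx; simp
    · rintro ⟨a, c⟩ hx; rfl
  rw [this, Finset.sum_product]
  simp [hcard, Finset.mul_sum]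

/-- Children of a node. -/
noncomputable def kids {d : ℕ} (V : ℕ → Set (Fin d → ℤ)) (t h : ℕ) (z : Fin d → ℤ) :
    Finset (Fin d → ℤ) := (boxZ z h).filter (fun a => a ∈ V (t + h))

theorem mem_kids {d : ℕ} {V : ℕ → Set (Fin d → ℤ)} {t h : ℕ} {z a : Fin d → ℤ} :
    a ∈ kids V t h z ↔ dvZ a h = z ∧ a ∈ V (t + h) := by
  simp [kids, mem_boxZ]

theorem kids_sum {d : ℕ} (hd : 1 ≤ d) (V : ℕ → Set (Fin d → ℤ)) (l : Fin d) (t h : ℕ) (z : Fin d → ℤ)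
    (G : (Fin d → ℤ) → ℝ) (X : ℝ)
    (hcol : ∀ a, dvZ a h = z →
      X ≤ ((2 : ℝ) ^ h) ^ (d - 1) * ∑ c ∈ colH V l t h a, G (Function.update a l c)) :
    X ≤ ∑ a ∈ kids V t h z, G a := by
  set F : (Fin d → ℤ) → ℝ := fun a => if a ∈ V (t + h) then G a else 0 with hF
  have h1 : ∑ a ∈ kids V t h z, G a = ∑ a ∈ boxZ z h, F a := by
    rw [kids, Finset.sum_filter]
  have h2 := column_double z h l F
  have h3 : ∀ a ∈ boxZ z h, X ≤ ((2 : ℝ) ^ h) ^ (d - 1) *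
      ∑ c ∈ Finset.Ico (z l * 2 ^ h) ((z l + 1) * 2 ^ h), F (Function.update a l c) := by
    intro a ha
    rw [mem_boxZ] at ha
    have := hcol a ha
    rwa [colH, Finset.sum_filter, ha] at this
  have h4 := Finset.sum_le_sum h3
  rw [← Finset.mul_sum, h2, Finset.sum_const, card_boxZ, nsmul_eq_mul] at h4
  rw [h1]
  push_cast at h4
  rw [← mul_assoc, ← pow_succ, Nat.sub_add_cancel hd] at h4
  exact le_of_mul_le_mul_left h4 (by positivity)


/-! ### Tree sums and covers -/

/-- Nodes of the tree that survive after removal of the stopping families `S`. -/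
noncomputable def treeR {d : ℕ} (V : ℕ → Set (Fin d → ℤ)) (t h : ℕ → ℕ)
    (S : ℕ → Finset (Fin d → ℤ)) (z₀ : Fin d → ℤ) : ℕ → Finset (Fin d → ℤ)
  | 0 => {z₀} \ S 0
  | j + 1 => ((treeR V t h S z₀ j).biUnion (kids V (t j) (h j))) \ S (j + 1)

theorem tree_bound {d : ℕ} (V : ℕ → Set (Fin d → ℤ)) (t h : ℕ → ℕ)
    (ht : ∀ j, t (j + 1) = t j + h j) (W : ℕ → (Fin d → ℤ) → ℝ) (hW : ∀ j z, 0 ≤ W j z)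
    (hsum : ∀ j, ∀ z ∈ V (t j), W j z ≤ ∑ a ∈ kids V (t j) (h j) z, W (j + 1) a)
    (S : ℕ → Finset (Fin d → ℤ)) (z₀ : Fin d → ℤ) (hz₀ : z₀ ∈ V (t 0)) (J : ℕ)
    (hcov : ∀ z ∈ V (t J), ∃ i ≤ J, dvZ z (t J - t i) ∈ S i) :
    W 0 z₀ ≤ ∑ i ∈ Finset.range (J + 1), ∑ a ∈ S i, W i a := by
  have hmono : Monotone t := monotone_nat_of_le_succ fun j => by rw [ht]; omega
  have hR : ∀ j, ∀ z ∈ treeR V t h S z₀ j, z ∈ V (t j) ∧ ∀ i ≤ j, dvZ z (t j - t i) ∉ S i := by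
    intro j
    induction j with
    | zero =>
      intro z hz
      simp only [treeR, Finset.mem_sdiff, Finset.mem_singleton] at hz
      obtain ⟨rfl, hz⟩ := hz
      refine ⟨hz₀, fun i hi => ?_⟩
      obtain rfl : i = 0 := by omega
      rw [Nat.sub_self, dvZ_zero]; exact hz
    | succ j ih =>
      intro z hz
      simp only [treeR, Finset.mem_sdiff, Finset.mem_biUnion] at hz
      obtain ⟨⟨w, hw, hz1⟩, hz2⟩ := hz
      rw [mem_kids] at hz1
      obtain ⟨hz1, hz3⟩ := hz1
      refine ⟨by rw [ht]; exact hz3, fun i hi => ?_⟩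
      rcases Nat.lt_or_ge j i with hij | hij
      · obtain rfl : i = j + 1 := by omega
        rw [Nat.sub_self, dvZ_zero]; exact hz2
      · have := (ih w hw).2 i hij
        rw [← hz1, dvZ_dvZ] at this
        have h1 := hmono hij
        have h2 := ht j
        rwa [show t (j + 1) - t i = h j + (t j - t i) by omega]
  have hsum' : ∀ j, W 0 z₀ ≤ ∑ i ∈ Finset.range (j + 1), ∑ a ∈ S i, W i a +
      ∑ z ∈ treeR V t h S z₀ j, W j z := by
    have hsd : ∀ j (A : Finset (Fin d → ℤ)), ∑ z ∈ A, W j z ≤ ∑ z ∈ S j, W j z + ∑ z ∈ A \ S j, W j z := by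
      intro j A
      rw [← Finset.sum_inter_add_sum_sdiff A (S j)]
      gcongr
      · intro i _ _; exact hW j i
      · exact Finset.inter_subset_right
    intro j
    induction j with
    | zero =>
      have := hsd 0 {z₀}
      simpa [treeR] using this
    | succ j ih =>
      refine ih.trans ?_
      rw [Finset.sum_range_succ _ (j + 1), add_assoc]
      gcongr
      have h1 : ∑ z ∈ treeR V t h S z₀ j, W j z ≤
          ∑ z ∈ (treeR V t h S z₀ j).biUnion (kids V (t j) (h j)), W (j + 1) z := by
        rw [Finset.sum_biUnion]
        · exact Finset.sum_le_sum fun z hz => hsum j z (hR j z hz).1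
        · intro a _ b _ hab
          rw [Function.onFun, Finset.disjoint_left]
          intro c hc hc'
          rw [mem_kids] at hc hc'
          exact hab (hc.1.symm.trans hc'.1)
      exact h1.trans (hsd (j + 1) _)
  have := hsum' J
  have hempty : treeR V t h S z₀ J = ∅ := by
    apply Finset.eq_empty_of_forall_notMem
    intro z hz
    obtain ⟨h1, h2⟩ := hR J z hz
    obtain ⟨i, hi, h3⟩ := hcov z h1
    exact h2 i hi h3
  rw [hempty, Finset.sum_empty, add_zero] at this
  exact this

theorem hausdorff_cover {Y : Type*} [MetricSpace Y] [MeasurableSpace Y] [BorelSpace Y]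
    {A : Set Y} (hA : A.Nonempty) {s : ℝ} (hs : 0 < s) (h0 : μH[s] A = 0) {δ : ℝ} (hδ : 0 < δ) :
    ∃ (y : ℕ → Y) (r : ℕ → ℝ), (∀ n, y n ∈ A) ∧ (∀ n, 0 < r n) ∧ A ⊆ ⋃ n, ball (y n) (r n) ∧
      ∀ F : Finset ℕ, ∑ n ∈ F, r n ^ s ≤ δ := by
  set η : ℝ := δ / (2 ^ s * 3) with hη
  have hηp : 0 < η := by positivity
  rw [Measure.hausdorffMeasure_apply] at h0
  have h1 := (iSup_eq_bot.1 h0) 1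
  have h2 := (iSup_eq_bot.1 h1) one_pos
  have h3 : (⨅ (T : ℕ → Set Y) (_ : A ⊆ ⋃ n, T n) (_ : ∀ n, ediam (T n) ≤ 1),
      ∑' n, ⨆ _ : (T n).Nonempty, ediam (T n) ^ s) < ENNReal.ofReal η := by
    rw [h2]; simpa using hηp
  simp only [iInf_lt_iff] at h3
  obtain ⟨T, hT, hT1, hTs⟩ := h3
  obtain ⟨a₀, ha₀⟩ := hA
  have hy : ∀ n, ∃ y ∈ A, (T n ∩ A).Nonempty → y ∈ T n := by
    intro n
    by_cases h : (T n ∩ A).Nonempty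
    · obtain ⟨y, hy⟩ := h; exact ⟨y, hy.2, fun _ => hy.1⟩
    · exact ⟨a₀, ha₀, fun h' => absurd h' h⟩
  choose y hyA hyT using hy
  have hfin : ∀ n, ediam (T n) ≠ ⊤ := fun n => ne_top_of_le_ne_top ENNReal.one_ne_top (hT1 n)
  set ρ : ℕ → ℝ := fun n => (ediam (T n)).toReal with hρ
  have hρ0 : ∀ n, 0 ≤ ρ n := fun n => ENNReal.toReal_nonneg
  have hb : ∀ n, 0 < ρ n ^ s + η * (1 / 2) ^ n := fun n => by
    have := Real.rpow_nonneg (hρ0 n) s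
    positivity
  refine ⟨y, fun n => 2 * (ρ n ^ s + η * (1 / 2) ^ n) ^ (1 / s), hyA, fun n => ?_, ?_, ?_⟩
  · have := hb n; positivity
  · intro w hw
    obtain ⟨n, hn⟩ := mem_iUnion.1 (hT hw)
    refine mem_iUnion.2 ⟨n, ?_⟩
    have h4 := hyT n ⟨w, hn, hw⟩
    rw [mem_ball]
    have h5 : dist w (y n) ≤ ρ n := by
      rw [dist_edist]
      exact ENNReal.toReal_mono (hfin n) (Metric.edist_le_ediam_of_mem hn h4)
    have h6 : ρ n ≤ (ρ n ^ s + η * (1 / 2) ^ n) ^ (1 / s) := by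
      calc ρ n = (ρ n ^ s) ^ (1 / s) := by
            rw [← Real.rpow_mul (hρ0 n), mul_one_div_cancel hs.ne', Real.rpow_one]
        _ ≤ _ := by
            apply Real.rpow_le_rpow (Real.rpow_nonneg (hρ0 n) s) _ (by positivity)
            have : 0 < η * (1 / 2) ^ n := by positivity
            linarith
    have h7 := Real.rpow_pos_of_pos (hb n) (1 / s)
    linarith
  · intro F
    have e1 : ∀ n, (2 * (ρ n ^ s + η * (1 / 2) ^ n) ^ (1 / s)) ^ s =
        2 ^ s * (ρ n ^ s + η * (1 / 2) ^ n) := by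
      intro n
      rw [Real.mul_rpow (by norm_num) (Real.rpow_nonneg (hb n).le _), ← Real.rpow_mul (hb n).le,
        one_div_mul_cancel hs.ne', Real.rpow_one]
    simp only [e1]
    rw [← Finset.mul_sum, Finset.sum_add_distrib, ← Finset.mul_sum]
    have h8 : ∑ n ∈ F, ((1 : ℝ) / 2) ^ n ≤ 2 := by
      have := summable_geometric_two.sum_le_tsum F (fun i _ => by positivity)
      rwa [tsum_geometric_two] at this
    have h9 : ∑ n ∈ F, ρ n ^ s ≤ η := by
      have h10 : ∑ n ∈ F, ediam (T n) ^ s ≤ ENNReal.ofReal η := by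
        refine le_trans (le_trans ?_ (ENNReal.sum_le_tsum F)) hTs.le
        apply Finset.sum_le_sum
        intro n _
        by_cases h : (T n).Nonempty
        · simp [h]
        · rw [Set.not_nonempty_iff_eq_empty] at h
          simp [h, hs]
      have h11 := ENNReal.toReal_mono ENNReal.ofReal_ne_top h10
      rw [ENNReal.toReal_ofReal hηp.le, ENNReal.toReal_sum] at h11
      · simpa only [← ENNReal.toReal_rpow] using h11
      · intro n _; exact ENNReal.rpow_ne_top_of_nonneg hs.le (hfin n)
    have h2s : (0 : ℝ) < 2 ^ s := by positivity
    calc (2 : ℝ) ^ s * (∑ n ∈ F, ρ n ^ s + η * ∑ n ∈ F, (1 / 2) ^ n)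
        ≤ 2 ^ s * (η + η * 2) := by gcongr
      _ = δ := by rw [hη]; field_simp; norm_num


/-! ### The ball lemma -/

section ball
variable {d : ℕ} {Y : Type*} [MetricSpace Y]
variable {C β : ℝ} {f : EuclideanSpace ℝ (Fin d) → Y} {E : Set (EuclideanSpace ℝ (Fin d))}
variable {V : ℕ → Set (Fin d → ℤ)}

theorem DD_decay (hd : 1 ≤ d) (hq : QSI C β f E) (hC : 0 < C) (hβ0 : 0 < β) (hβ1 : β ≤ 1)
    (hB : Bornology.IsBounded (f '' E)) (hanc : ∀ t h z, z ∈ V (t + h) → dvZ z h ∈ V t)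
    {t₀ : ℕ} (hT : Thick E V t₀) :
    ∃ K : ℝ, 0 < K ∧ ∀ t, t₀ ≤ t → ∀ z ∈ V t, DD f E t z ≤ K * 2 ^ (-(β * (t : ℝ))) := by
  have hd' : (1 : ℝ) ≤ d := by exact_mod_cast hd
  have hM : 0 ≤ Metric.diam (f '' E) := Metric.diam_nonneg
  refine ⟨C * (8 * d) ^ (1 / β) * (8 * d) ^ β * 2 ^ (β * (t₀ : ℝ)) * (Metric.diam (f '' E) + 1),
    by positivity, ?_⟩
  intro t ht z hz
  obtain ⟨h, rfl⟩ := Nat.exists_eq_add_of_le ht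
  have h1 := DD_child hd hq hC hβ0 hβ1 hB hT (hanc _ _ _ hz)
  have h2 : DD f E t₀ (dvZ z h) ≤ Metric.diam (f '' E) + 1 := by
    refine (Metric.diam_mono (Set.image_mono Set.inter_subset_left) hB).trans (by linarith)
  calc DD f E (t₀ + h) z ≤ _ := h1
    _ ≤ C * (8 * d) ^ (1 / β) * (8 * d) ^ β * 2 ^ (-(β * (h : ℝ))) * (Metric.diam (f '' E) + 1) := by
        gcongr
    _ = _ := by
        have : (2 : ℝ) ^ (-(β * (h : ℝ))) = 2 ^ (β * (t₀ : ℝ)) * 2 ^ (-(β * ((t₀ + h : ℕ) : ℝ))) := by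
          rw [← Real.rpow_add (by norm_num)]
          congr 1; push_cast; ring
        rw [this]; ring

theorem start_radius (hq : QSI C β f E) (hC : 0 < C) (hβ0 : 0 < β) (hβ1 : β ≤ 1)
    (hEb : Bornology.IsBounded E) (hinj : InjOn f E) {p q : EuclideanSpace ℝ (Fin d)}
    (hp : p ∈ E) (hqE : q ∈ E) (hpq : p ≠ q) (t₀ : ℕ) :
    ∃ r₀ : ℝ, 0 < r₀ ∧ ∀ x ∈ E, ∀ y ∈ E, dist (f x) (f y) < r₀ → dist x y ≤ 1 / 2 ^ t₀ := by
  obtain ⟨R, hR⟩ := hEb.exists_norm_le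
  set c : ℝ := max 1 (2 * R * 2 ^ t₀) with hc
  have hc1 : 1 ≤ c := le_max_left _ _
  have hM : 0 < dist (f p) (f q) := dist_pos.2 fun h => hpq (hinj hp hqE h)
  have hK : 0 < 2 * C * c ^ (1 / β) := by positivity
  refine ⟨dist (f p) (f q) / (2 * C * c ^ (1 / β)), by positivity, ?_⟩
  intro x hx y hy hxy
  by_contra hcon
  push Not at hcon
  have key : ∀ w ∈ E, dist (f x) (f w) ≤ C * c ^ (1 / β) * dist (f x) (f y) := by
    intro w hw
    refine hq.le hC hβ0 hβ1 hx hw hy (ρ := 1 / 2 ^ t₀) (by positivity) hcon.le hc1 ?_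
    rw [mul_one_div, le_div_iff₀ (by positivity)]
    refine le_trans ?_ (le_max_right _ _)
    have : dist x w ≤ 2 * R := by
      rw [dist_eq_norm]
      exact (norm_sub_le _ _).trans (by have := hR x hx; have := hR w hw; linarith)
    gcongr
  have h1 := key p hp
  have h2 := key q hqE
  have h3 := dist_triangle_left (f p) (f q) (f x)
  rw [lt_div_iff₀ hK] at hxy
  nlinarith

theorem ball_lemma (hd : 1 ≤ d) (hq : QSI C β f E) (hC : 0 < C) (hβ0 : 0 < β) (hβ1 : β ≤ 1)
    (hB : Bornology.IsBounded (f '' E)) (hEb : Bornology.IsBounded E) (hinj : InjOn f E)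
    (hanc : ∀ t h z, z ∈ V (t + h) → dvZ z h ∈ V t)
    (hVcov : ∀ x ∈ E, ∀ t, ∃ z ∈ V t, x ∈ dyC t z)
    {t h : ℕ → ℕ} (ht : ∀ j, t (j + 1) = t j + h j) (hh : ∀ j, 2 ≤ h j)
    (hT : ∀ j, Thick E V (t j)) {ε : ℝ} (hε : 0 < ε) (hεh : ∀ j, (h j : ℝ) ≤ ε * t j)
    {s : ℝ} (hs : 0 < s) :
    ∃ r₀ K : ℝ, 0 < r₀ ∧ 0 < K ∧ ∀ x ∈ E, ∀ r, 0 < r → r ≤ r₀ →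
      ∃ (j : ℕ) (S : Finset (Fin d → ℤ)),
        (∀ z ∈ V (t j), ∀ y ∈ E, y ∈ dyC (t j) z → dist (f x) (f y) < r → z ∈ S) ∧
        ∑ z ∈ S, DD f E (t j) z ^ ((1 + ε / β ^ 2) * s) ≤ K * r ^ s := by
  have hd' : (1 : ℝ) ≤ d := by exact_mod_cast hd
  have hmono : Monotone t := monotone_nat_of_le_succ fun j => by rw [ht]; omega
  have htj : ∀ j, j ≤ t j := by
    intro j
    induction j with
    | zero => omega
    | succ j ih => rw [ht]; have := hh j; omega
  obtain ⟨K, hK, hdecay⟩ := DD_decay hd hq hC hβ0 hβ1 hB hanc (hT 0)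
  by_cases hEn : E.Nonempty
  swap
  · exact ⟨1, 1, one_pos, one_pos, fun x hx => absurd ⟨x, hx⟩ hEn⟩
  obtain ⟨x₀, hx₀⟩ := hEn
  obtain ⟨z₀, hz₀, -⟩ := hVcov x₀ hx₀ (t 0)
  obtain ⟨p, hp, q, hqE, -, -, hpq⟩ := hT 0 z₀ hz₀
  have hpq' : p ≠ q := dist_pos.1 (lt_of_lt_of_le (by positivity) hpq)
  obtain ⟨r₀, hr₀, hstart⟩ := start_radius hq hC hβ0 hβ1 hEb hinj hp hqE hpq' (t 0)
  set θ := ε / β ^ 2 with hθ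
  have hθ0 : 0 < θ := by positivity
  set K₂ : ℝ := 2 * C * ((d : ℝ) + 1) ^ (1 / β) with hK₂
  have hK₂p : 0 < K₂ := by positivity
  refine ⟨r₀, 5 ^ d * (K₂ * K ^ θ) ^ s, hr₀, by positivity, ?_⟩
  intro x hx r hr hrr
  -- the scale
  have hfail : ∃ j, ¬ ∀ y ∈ E, dist (f x) (f y) < r → dist x y ≤ 1 / 2 ^ t j := by
    have hlim : Tendsto (fun j : ℕ => K * (2 ^ (-β)) ^ j) atTop (nhds (K * 0)) := by
      apply Tendsto.const_mul
      apply tendsto_pow_atTop_nhds_zero_of_lt_one (by positivity)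
      exact Real.rpow_lt_one_of_one_lt_of_neg (by norm_num) (by linarith)
    rw [mul_zero] at hlim
    obtain ⟨j, hj⟩ := (hlim.eventually (gt_mem_nhds hr)).exists
    refine ⟨j + 2, fun hall => ?_⟩
    obtain ⟨z, hz, hxz⟩ := hVcov x hx (t j)
    obtain ⟨w, hw, hwz, hxw⟩ := (hT j).far hz x
    have h1 : dist (f x) (f w) < r := by
      refine lt_of_le_of_lt ((le_DD hB hx hxz hw hwz).trans
        (hdecay (t j) (hmono (Nat.zero_le j)) z hz)) (lt_of_le_of_lt ?_ hj)
      rw [← Real.rpow_natCast, ← Real.rpow_mul (by norm_num)]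
      apply mul_le_mul_of_nonneg_left _ hK.le
      apply Real.rpow_le_rpow_of_exponent_le (by norm_num)
      have : (j : ℝ) ≤ t j := by exact_mod_cast htj j
      nlinarith
    have h2 := hall w hw h1
    have h3 : t j + 4 ≤ t (j + 2) := by
      have := hh j; have := hh (j + 1); have := ht j
      have h9 : t (j + 2) = t (j + 1) + h (j + 1) := ht (j + 1)
      omega
    have h4 : (1 : ℝ) / 2 ^ t (j + 2) ≤ 1 / 2 ^ (t j + 4) :=
      one_div_le_one_div_of_le (by positivity) (pow_le_pow_right₀ (by norm_num) h3)
    have h5 : (1 : ℝ) / 2 ^ (t j + 4) < 1 / (8 * 2 ^ t j) := by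
      apply one_div_lt_one_div_of_lt (by positivity)
      rw [pow_add]
      have : (0 : ℝ) < 2 ^ t j := by positivity
      linarith
    linarith
  classical
  have hfind := Nat.find_spec hfail
  have hmin := fun m => Nat.find_min (m := m) hfail
  set J := Nat.find hfail with hJ
  have hJ0 : J ≠ 0 := by
    intro h0
    rw [h0] at hfind
    exact hfind fun y hy hxy => hstart x hx y hy (hxy.trans_le hrr)
  obtain ⟨j, hj⟩ := Nat.exists_eq_succ_of_ne_zero hJ0
  have hPj : ∀ y ∈ E, dist (f x) (f y) < r → dist x y ≤ 1 / 2 ^ t j := by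
    have := hmin j (by omega)
    push Not at this
    exact this
  rw [hj] at hfind
  push Not at hfind
  obtain ⟨y₀, hy₀, hy₀r, hy₀d⟩ := hfind
  rw [Nat.succ_eq_add_one, ht j] at hy₀d
  refine ⟨j, (Fintype.piFinset fun i =>
    Finset.Icc (⌊x i * 2 ^ t j⌋ - 2) (⌊x i * 2 ^ t j⌋ + 2)).filter
      (fun z => ∃ y ∈ E, y ∈ dyC (t j) z ∧ dist (f x) (f y) < r ∧ z ∈ V (t j)), ?_, ?_⟩
  · intro z hz y hy hyz hxy
    rw [Finset.mem_filter]
    refine ⟨?_, y, hy, hyz, hxy, hz⟩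
    rw [Fintype.mem_piFinset]
    intro i
    have h1 := hPj y hy hxy
    have h2 := (coord_le_dist x y i).trans h1
    have hpos : (0 : ℝ) < 2 ^ t j := by positivity
    rw [le_div_iff₀ hpos, ← abs_of_pos hpos, ← abs_mul, sub_mul, abs_le] at h2
    obtain ⟨h3, h4⟩ := (mem_dyC _ _ _).1 hyz i
    have h5 := Int.floor_le (x i * 2 ^ t j)
    have h6 := Int.lt_floor_add_one (x i * 2 ^ t j)
    rw [Finset.mem_Icc]
    constructor
    · have : ((⌊x i * 2 ^ t j⌋ : ℤ) : ℝ) - 2 ≤ z i := by linarith [h2.1, h2.2]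
      exact_mod_cast this
    · have : ((z i : ℤ) : ℝ) < ⌊x i * 2 ^ t j⌋ + 2 + 1 := by linarith [h2.1, h2.2]
      have : z i < ⌊x i * 2 ^ t j⌋ + 2 + 1 := by exact_mod_cast this
      omega
  · have hterm : ∀ z ∈ (Fintype.piFinset fun i =>
        Finset.Icc (⌊x i * 2 ^ t j⌋ - 2) (⌊x i * 2 ^ t j⌋ + 2)).filter
        (fun z => ∃ y ∈ E, y ∈ dyC (t j) z ∧ dist (f x) (f y) < r ∧ z ∈ V (t j)),
        DD f E (t j) z ^ ((1 + θ) * s) ≤ (K₂ * K ^ θ) ^ s * r ^ s := by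
      intro z hz
      rw [Finset.mem_filter] at hz
      obtain ⟨-, y, hy, hyz, hxy, hzV⟩ := hz
      have hxy' := hPj y hy hxy
      have hDn := DD_nonneg (f := f) (E := E) (t j) z
      have hD1 : DD f E (t j) z ≤ K₂ * 2 ^ ((h j : ℝ) / β) * r := by
        have key : ∀ w ∈ E, w ∈ dyC (t j) z →
            dist (f x) (f w) ≤ C * (((d : ℝ) + 1) * 2 ^ h j) ^ (1 / β) * r := by
          intro w hw hwz
          have h2h : (1 : ℝ) ≤ 2 ^ h j := one_le_pow₀ (by norm_num)
          refine (hq.le hC hβ0 hβ1 hx hw hy₀ (ρ := 1 / 2 ^ (t j + h j))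
            (c := ((d : ℝ) + 1) * 2 ^ h j) (by positivity) hy₀d.le (by nlinarith) ?_).trans ?_
          · refine (dist_triangle x y w).trans ((add_le_add hxy' (dyC_dist hyz hwz)).trans
              (le_of_eq ?_))
            rw [pow_add]; field_simp; ring
          · gcongr
        have e1 : (((d : ℝ) + 1) * 2 ^ h j) ^ (1 / β) = ((d : ℝ) + 1) ^ (1 / β) * 2 ^ ((h j : ℝ) / β) := by
          rw [Real.mul_rpow (by positivity) (by positivity), ← Real.rpow_natCast,
            ← Real.rpow_mul (by norm_num), mul_one_div]
        rw [e1] at key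
        refine DD_le (by positivity) fun a ha ha' b hb hb' => ?_
        have k1 := key a ha ha'
        have k2 := key b hb hb'
        have := dist_triangle_left (f a) (f b) (f x)
        rw [hK₂]
        linarith
      have hD2 := hdecay (t j) (hmono (Nat.zero_le j)) z hzV
      have hD3 : DD f E (t j) z ^ θ * 2 ^ ((h j : ℝ) / β) ≤ K ^ θ := by
        calc DD f E (t j) z ^ θ * 2 ^ ((h j : ℝ) / β)
            ≤ (K * 2 ^ (-(β * (t j : ℝ)))) ^ θ * 2 ^ (ε * t j / β) := by
              gcongr
              · norm_num
              · exact hεh j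
          _ = K ^ θ := by
              rw [Real.mul_rpow hK.le (by positivity), ← Real.rpow_mul (by norm_num), mul_assoc,
                ← Real.rpow_add (by norm_num)]
              have : -(β * (t j : ℝ)) * θ + ε * t j / β = 0 := by
                rw [hθ]; field_simp; ring
              rw [this, Real.rpow_zero, mul_one]
      have hD4 : DD f E (t j) z ^ (1 + θ) ≤ K₂ * K ^ θ * r := by
        rcases hDn.eq_or_lt with h0 | h0
        · rw [← h0, Real.zero_rpow (by positivity)]; positivity
        · rw [Real.rpow_add h0, Real.rpow_one]
          have hp := Real.rpow_pos_of_pos h0 θ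
          calc DD f E (t j) z * DD f E (t j) z ^ θ
              ≤ (K₂ * 2 ^ ((h j : ℝ) / β) * r) * DD f E (t j) z ^ θ := by gcongr
            _ = K₂ * r * (DD f E (t j) z ^ θ * 2 ^ ((h j : ℝ) / β)) := by ring
            _ ≤ K₂ * r * K ^ θ := by gcongr
            _ = _ := by ring
      rw [Real.rpow_mul hDn, ← Real.mul_rpow (by positivity) hr.le]
      exact Real.rpow_le_rpow (Real.rpow_nonneg hDn _) hD4 hs.le
    refine (Finset.sum_le_card_nsmul _ _ _ hterm).trans ?_
    rw [nsmul_eq_mul, mul_assoc (5 ^ d : ℝ)]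
    apply mul_le_mul_of_nonneg_right _ (by positivity)
    have hc1 := Finset.card_filter_le (Fintype.piFinset fun i =>
      Finset.Icc (⌊x i * 2 ^ t j⌋ - 2) (⌊x i * 2 ^ t j⌋ + 2))
      (fun z => ∃ y ∈ E, y ∈ dyC (t j) z ∧ dist (f x) (f y) < r ∧ z ∈ V (t j))
    have hc2 : (Fintype.piFinset fun i =>
      Finset.Icc (⌊x i * 2 ^ t j⌋ - 2) (⌊x i * 2 ^ t j⌋ + 2)).card = 5 ^ d := by
      have : ∀ m : ℤ, (Finset.Icc (m - 2) (m + 2)).card = 5 := by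
        intro m; rw [Int.card_Icc]; omega
      simp [Fintype.card_piFinset, this]
    rw [hc2] at hc1
    exact_mod_cast hc1

end ball


/-! ### The main theorem -/

theorem sum_biUnion_le_real {ι α : Type*} [DecidableEq α] (F : Finset ι) (S : ι → Finset α)
    (w : α → ℝ) (hw : ∀ a, 0 ≤ w a) :
    ∑ a ∈ F.biUnion S, w a ≤ ∑ n ∈ F, ∑ a ∈ S n, w a := by
  classical
  induction F using Finset.induction_on with
  | empty => simp
  | insert n F hn ih =>
    rw [Finset.biUnion_insert, Finset.sum_insert hn]
    have h1 := Finset.sum_union_inter (s₁ := S n) (s₂ := F.biUnion S) (f := w)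
    have h2 : 0 ≤ ∑ a ∈ S n ∩ F.biUnion S, w a := Finset.sum_nonneg fun a _ => hw a
    linarith

theorem core_contra {d : ℕ} {Y : Type*} [MetricSpace Y] (hd : 1 ≤ d)
    {C β : ℝ} {f : EuclideanSpace ℝ (Fin d) → Y} {E : Set (EuclideanSpace ℝ (Fin d))}
    {V : ℕ → Set (Fin d → ℤ)} (hq : QSI C β f E) (hC : 0 < C) (hβ0 : 0 < β) (hβ1 : β ≤ 1)
    (hEc : IsCompact E) (hEn : E.Nonempty) (hinj : InjOn f E)
    (hanc : ∀ t h z, z ∈ V (t + h) → dvZ z h ∈ V t)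
    (hVcov : ∀ x ∈ E, ∀ t, ∃ z ∈ V t, x ∈ dyC t z)
    (hpt : ∀ t, ∀ z ∈ V t, ∃ p ∈ E, p ∈ dyC t z) (l : Fin d)
    (hscale : ∀ (q : ℕ) (A κ ε : ℝ), 0 < κ → 0 < ε → ∃ t h g : ℕ → ℕ, ∀ j,
      ColP V l (t j) (h j) (g j) ∧ t (j + 1) = t j + h j ∧
      A * (g j : ℝ) ^ q ≤ 2 ^ (κ * (h j : ℝ)) ∧ (h j : ℝ) ≤ ε * t j ∧ 1 ≤ g j ∧
      4 * g j ≤ 2 ^ h j ∧ 2 ≤ h j)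
    {s : ℝ} (hs0 : 0 < s) (hsd : s < d) (hs1 : 2 ≤ d → 1 ≤ s)
    (hcover : ∀ δ : ℝ, 0 < δ → ∃ (y : ℕ → Y) (r : ℕ → ℝ), (∀ n, y n ∈ f '' E) ∧ (∀ n, 0 < r n) ∧
      f '' E ⊆ ⋃ n, ball (y n) (r n) ∧ ∀ F : Finset ℕ, ∑ n ∈ F, r n ^ s ≤ δ) : False := by
  have hd' : (1 : ℝ) ≤ d := by exact_mod_cast hd
  have hfc : IsCompact (f '' E) := hEc.image_of_continuousOn (hq.continuousOn hβ0)
  have hB := hfc.isBounded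
  set ε : ℝ := β ^ 2 * ((d - s) / (2 * s)) with hεdef
  have hds : 0 < (d : ℝ) - s := by linarith
  have hε : 0 < ε := by positivity
  set s' : ℝ := (1 + ε / β ^ 2) * s with hs'
  have hs'e : s' = s + (d - s) / 2 := by
    rw [hs', hεdef]; field_simp
  have hs'0 : 0 < s' := by rw [hs'e]; linarith
  have hs'd : s' < d := by rw [hs'e]; linarith
  have hs'1 : 2 ≤ d → 1 ≤ s' := fun h => by have := hs1 h; rw [hs'e]; linarith
  obtain ⟨A, κ, q, hκ, hcolpow⟩ := col_pow d hd s' hs'0 hs'd hs'1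
    (2 * C * (4 * d) ^ (1 / β) * C * (16 * d) ^ (1 / β)) (C * (8 * d) ^ (1 / β) * (8 * d) ^ β) β
    (by positivity) (by positivity) hβ0 ⌈1 / β⌉₊
  obtain ⟨t, h, g, H⟩ := hscale q A κ ε hκ hε
  have hT : ∀ j, Thick E V (t j) := fun j =>
    ColP.thick (H j).1 (H j).2.2.2.2.1 (H j).2.2.2.2.2.1 hpt
  have ht : ∀ j, t (j + 1) = t j + h j := fun j => (H j).2.1
  have hmono : Monotone t := monotone_nat_of_le_succ fun j => by rw [ht]; omega
  -- sum over children
  set W : ℕ → (Fin d → ℤ) → ℝ := fun j z => DD f E (t j) z ^ s' with hWdef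
  have hW0 : ∀ j z, 0 ≤ W j z := fun j z => Real.rpow_nonneg (DD_nonneg _ _) _
  have hsum : ∀ j, ∀ z ∈ V (t j), W j z ≤ ∑ a ∈ kids V (t j) (h j) z, W (j + 1) a := by
    intro j z hz
    obtain ⟨h1, h2, h3, h4, h5, h6, h7⟩ := H j
    have hT' : Thick E V (t j + h j) := by rw [← ht]; exact hT (j + 1)
    apply kids_sum hd V l (t j) (h j) z (W (j + 1)) (W j z)
    intro a ha
    have hav : dvZ a (h j) ∈ V (t j) := by rw [ha]; exact hz
    have hcs := column_sum hd hq hC hβ0 hβ1 hB hpt h1 h5 h6 hT' a hav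
    rw [ha] at hcs
    have := hcolpow (h j) (g j) (DD f E (t j) z) (colH V l (t j) (h j) a)
      (fun c => DD f E (t j + h j) (Function.update a l c)) h5 (DD_nonneg _ _) ?_
      (fun c => DD_nonneg _ _) hcs ?_ h3
    · simp only [hWdef, ht j]
      exact this
    · refine (Finset.card_filter_le _ _).trans (le_of_eq ?_)
      rw [Int.card_Ico]
      have : (dvZ a (h j) l + 1) * 2 ^ h j - dvZ a (h j) l * 2 ^ h j = ((2 ^ h j : ℕ) : ℤ) := by
        push_cast; ring
      rw [this, Int.toNat_natCast]
    · intro c hc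
      rw [colH, Finset.mem_filter, Finset.mem_Ico] at hc
      have e := dvZ_update hc.1.1 hc.1.2
      have := DD_child (z := Function.update a l c) (h := h j) hd hq hC hβ0 hβ1 hB (hT j)
        (by rw [e]; exact hav)
      rw [e, ha] at this
      exact this
  -- the root
  obtain ⟨x₀, hx₀⟩ := hEn
  obtain ⟨z₀, hz₀, -⟩ := hVcov x₀ hx₀ (t 0)
  have hW00 : 0 < W 0 z₀ := by
    obtain ⟨p, hp, p', hp', hpz, hpz', hpp⟩ := hT 0 z₀ hz₀
    have hne : p ≠ p' := dist_pos.1 (lt_of_lt_of_le (by positivity) hpp)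
    apply Real.rpow_pos_of_pos
    exact lt_of_lt_of_le (dist_pos.2 fun h => hne (hinj hp hp' h)) (le_DD hB hp hpz hp' hpz')
  obtain ⟨r₀, K, hr₀, hK, hball⟩ := ball_lemma hd hq hC hβ0 hβ1 hB hEc.isBounded hinj hanc hVcov ht
    (fun j => (H j).2.2.2.2.2.2) hT hε (fun j => (H j).2.2.2.1) hs0
  have hr₀s := Real.rpow_pos_of_pos hr₀ s
  obtain ⟨y, r, hyE, hr, hcov, hrs⟩ := hcover (min (r₀ ^ s) (W 0 z₀ / (2 * K)))
    (lt_min hr₀s (by positivity))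
  choose x hxE hxy using hyE
  have hrr : ∀ n, r n ≤ r₀ := by
    intro n
    have := (hrs {n}).trans (min_le_left _ _)
    rw [Finset.sum_singleton] at this
    exact (Real.rpow_le_rpow_iff (hr n).le hr₀.le hs0).1 this
  choose j S hS1 hS2 using fun n => hball (x n) (hxE n) (r n) (hr n) (hrr n)
  obtain ⟨F, hF⟩ := hfc.elim_finite_subcover (fun n => ball (y n) (r n)) (fun n => isOpen_ball) hcov
  have hbound := tree_bound V t h ht W hW0 hsum
    (fun i => (F.filter (fun n => j n = i)).biUnion S) z₀ hz₀ (F.sup j) (by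
      intro z hz
      obtain ⟨p, hp, hpz⟩ := hpt _ z hz
      have hpF := hF ⟨p, hp, rfl⟩
      simp only [mem_iUnion] at hpF
      obtain ⟨n, hnF, hn⟩ := hpF
      have hjn : j n ≤ F.sup j := Finset.le_sup hnF
      have htn := hmono hjn
      refine ⟨j n, hjn, ?_⟩
      rw [Finset.mem_biUnion]
      refine ⟨n, by simp [hnF], ?_⟩
      have e : t (F.sup j) = t (j n) + (t (F.sup j) - t (j n)) := by omega
      refine hS1 n _ ?_ p hp ?_ ?_
      · apply hanc; rw [← e]; exact hz
      · apply dyC_subset; rw [← e]; exact hpz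
      · rw [hxy, dist_comm]; exact hn)
  have hle : ∑ i ∈ Finset.range (F.sup j + 1),
      ∑ a ∈ (F.filter (fun n => j n = i)).biUnion S, W i a ≤ ∑ n ∈ F, ∑ a ∈ S n, W (j n) a := by
    have hmaps : ∀ n ∈ F, j n ∈ Finset.range (F.sup j + 1) := fun n hn => by
      have : j n ≤ F.sup j := Finset.le_sup hn
      simp; omega
    rw [← Finset.sum_fiberwise_of_maps_to hmaps]
    apply Finset.sum_le_sum
    intro i _
    refine (sum_biUnion_le_real _ _ _ (hW0 i)).trans (le_of_eq ?_)
    apply Finset.sum_congr rfl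
    intro n hn
    rw [(Finset.mem_filter.1 hn).2]
  have hle2 : ∑ n ∈ F, ∑ a ∈ S n, W (j n) a ≤ K * ∑ n ∈ F, r n ^ s := by
    rw [Finset.mul_sum]
    exact Finset.sum_le_sum fun n _ => hS2 n
  have hle3 := (hrs F).trans (min_le_right _ _)
  rw [le_div_iff₀ (by positivity)] at hle3
  nlinarith

theorem VV_E_nonempty {d : ℕ} {N k : ℕ → ℕ} {𝓔 : ℕ → Set (Set (EuclideanSpace ℝ (Fin d)))}
    (hpow : ∀ n, 1 ≤ n → N n = 2 ^ k n) (h𝓔 : IsDenseCantorFamilies d N 𝓔) :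
    (⋂ n, ⋃₀ 𝓔 n).Nonempty := by
  have h0 : (fun _ => 0 : Fin d → ℤ) ∈ ZZ k 𝓔 0 := by
    show dyC (KK k 0) _ ∈ 𝓔 0
    rw [h𝓔.1]
    simp [dyC, KK]
  obtain ⟨p, hp, -⟩ := VV_point hpow h𝓔 0 (dvZ (fun _ => 0) (KK k 0 - 0)) ⟨0, by simp, _, h0, rfl⟩
  exact ⟨p, hp⟩


/-- Let `E ⊆ [0,1]^d` be a `(log N_n / N_n)_n`-dense Cantor set built on an
increasing sequence `(N_n)` of powers of two with `N 1 ≥ 2`. Then every `β`-power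
quasisymmetry `f : E → Y` satisfies `dimH (f '' E) ≥ d`. -/
theorem denseCantor_dimH_image_ge
    (d : ℕ) (hd : 1 ≤ d) (N k : ℕ → ℕ) (hpow : ∀ n, 1 ≤ n → N n = 2 ^ k n)
    (hN1 : 2 ≤ N 1) (hNmono : ∀ n, 1 ≤ n → N n < N (n + 1))
    (𝓔 : ℕ → Set (Set (EuclideanSpace ℝ (Fin d)))) (h𝓔 : IsDenseCantorFamilies d N 𝓔)
    (hdense : IsDeltaDense (fun n => Real.log (N n) / (N n : ℝ)) 𝓔)
    (E : Set (EuclideanSpace ℝ (Fin d))) (hE : E = ⋂ n, ⋃₀ 𝓔 n)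
    (β : ℝ) (hβ0 : 0 < β) (hβ1 : β ≤ 1)
    (Y : Type) [MetricSpace Y] (f : EuclideanSpace ℝ (Fin d) → Y)
    (hf : IsPowerQSOn β f E) :
    (d : ℝ≥0∞) ≤ dimH (f '' E) := by

  by_contra hcon
  rw [not_le] at hcon
  obtain ⟨C, hC, hinj, hq⟩ := hf
  subst hE
  have hk1 : 1 ≤ k 1 := by
    by_contra h0
    have h1 := hpow 1 le_rfl
    rw [show k 1 = 0 by omega] at h1
    omega
  have hk : ∀ n, 1 ≤ n → k n < k (n + 1) := by
    intro n hn
    have h1 := hNmono n hn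
    rw [hpow n hn, hpow (n + 1) (by omega)] at h1
    exact (Nat.pow_lt_pow_iff_right (by norm_num)).1 h1
  have hKt : ∀ t, ∃ n, t ≤ KK k n := by
    intro t
    refine ⟨t + 1, ?_⟩
    have := k_ge hk1 hk (t + 1) (by omega)
    rw [KK_succ]; omega
  obtain ⟨n₀, hden⟩ := hdense
  have hmax : max (dimH (f '' ⋂ n, ⋃₀ 𝓔 n)) ((d - 1 : ℕ) : ℝ≥0∞) < d := by
    refine max_lt hcon ?_
    exact_mod_cast (by omega : d - 1 < d)
  obtain ⟨s, hs1, hs2⟩ := ENNReal.lt_iff_exists_nnreal_btwn.1 hmax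
  obtain ⟨hs3, hs4⟩ := max_lt_iff.1 hs1
  have hs4' : ((d - 1 : ℕ) : ℝ) < s := by exact_mod_cast hs4
  have hs2' : (s : ℝ) < d := by exact_mod_cast hs2
  have hs0 : 0 < (s : ℝ) := lt_of_le_of_lt (by positivity) hs4'
  borelize Y
  have hμ := hausdorffMeasure_of_dimH_lt hs3
  have hEn := VV_E_nonempty hpow h𝓔
  refine core_contra (V := VV k 𝓔) (s := (s : ℝ)) hd hq hC hβ0 hβ1 (E_compact hpow h𝓔) hEn hinj
    VV_anc (VV_cover hpow h𝓔 hKt) (VV_point hpow h𝓔) ⟨d - 1, by omega⟩ ?_ hs0 hs2' ?_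
    (fun δ hδ => hausdorff_cover (hEn.image f) hs0 hμ hδ)
  · intro q A κ ε hκ hε
    obtain ⟨t, h, g, ν, H⟩ := scale_seq hk1 hk d n₀ q A κ ε hκ hε
    refine ⟨t, h, g, fun j => ?_⟩
    obtain ⟨h1, h2, h3, h4, h5, h6, h7, h8, h9, h10⟩ := H j
    refine ⟨?_, h3, h6, h7, h8, h9, h10⟩
    intro a ha c₀ hc₀ hc₁
    exact VV_column hpow h𝓔 hden _ rfl (ν j) (t j) (h j) (g j) h1 h2 h4 h5 a ha c₀ hc₀ hc₁
  · intro h2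
    have : (1 : ℝ) ≤ ((d - 1 : ℕ) : ℝ) := by exact_mod_cast (by omega : 1 ≤ d - 1)
    linarith
end

section
/- For an integer N ≥ 2 define g_N : [0,1] → ℝ by g_N(s) = 1 − (1−s)^N − N·s·(1−s)^{N−1} + N^{−5}. If (N_k)_{k=1}^{n} is a nondecreasing finite sequence of integers with N_1 ≥ 2, then for every 1 ≤ k ≤ n one has (g_{N_k} ∘ g_{N_{k+1}} ∘ ⋯ ∘ g_{N_n})(0) ≤ 4·N_k^{−5}; in particular (g_{N_1} ∘ g_{N_2} ∘ ⋯ ∘ g_{N_n})(0) ≤ 1/8 for every n. -/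
open Set Metric MeasureTheory ProbabilityTheory Filter
open scoped ENNReal NNReal Classical

theorem gFun_aux (M : ℕ) (hM : 1 ≤ M) (s : ℝ) (h0 : 0 ≤ s)
    (hs : s ≤ 4 * (((M + 1 : ℕ) : ℝ) ^ 5)⁻¹) :
    0 ≤ gFun (M + 1) s ∧ gFun (M + 1) s ≤ 4 * (((M + 1 : ℕ) : ℝ) ^ 5)⁻¹ := by
  have hg : gFun (M + 1) s =
      1 - (1 - s) ^ M * (1 + M * s) + (((M + 1 : ℕ) : ℝ) ^ 5)⁻¹ := by
    unfold gFun
    rw [Nat.add_sub_cancel, pow_succ]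
    push_cast
    ring
  rw [hg]
  have hx : (2 : ℝ) ≤ ((M + 1 : ℕ) : ℝ) := by exact_mod_cast Nat.succ_le_succ hM
  have hMx : (M : ℝ) = ((M + 1 : ℕ) : ℝ) - 1 := by push_cast; ring
  generalize ((M + 1 : ℕ) : ℝ) = x at *
  have hM0 : (0 : ℝ) ≤ M := Nat.cast_nonneg M
  have h8 : (8 : ℝ) ≤ x ^ 3 := by
    calc (8 : ℝ) = 2 ^ 3 := by norm_num
      _ ≤ x ^ 3 := by gcongr
  have h32 : (32 : ℝ) ≤ x ^ 5 := by
    calc (32 : ℝ) = 2 ^ 5 := by norm_num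
      _ ≤ x ^ 5 := by gcongr
  have hpos : 0 < (x ^ 5)⁻¹ := by positivity
  have hinv : (x ^ 5)⁻¹ * x ^ 5 = 1 := inv_mul_cancel₀ (by positivity)
  generalize hr : (x ^ 5)⁻¹ = r at *
  have hr32 : r ≤ 1 / 32 := by nlinarith
  have hs1 : s ≤ 1 / 8 := by linarith
  have hb1 : 1 + (M : ℝ) * s ≤ (1 + s) ^ M := one_add_mul_le_pow (by linarith) M
  have hb2 : 1 + (M : ℝ) * (-s) ≤ (1 + -s) ^ M := one_add_mul_le_pow (by linarith) M
  have hnn : 0 ≤ (1 - s) ^ M := pow_nonneg (by linarith) M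
  have hMs : 0 ≤ (M : ℝ) * s := by positivity
  constructor
  · have h1 : (1 - s) ^ M * (1 + M * s) ≤ 1 := by
      calc (1 - s) ^ M * (1 + M * s) ≤ (1 - s) ^ M * (1 + s) ^ M := by gcongr
        _ = ((1 - s) * (1 + s)) ^ M := (mul_pow _ _ _).symm
        _ ≤ 1 := pow_le_one₀ (by nlinarith) (by nlinarith)
    linarith
  · have h1 : (1 - M * s) * (1 + M * s) ≤ (1 - s) ^ M * (1 + M * s) := by
      apply mul_le_mul_of_nonneg_right _ (by linarith)
      rw [sub_eq_add_neg 1 s]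
      linarith
    have h2 : (M : ℝ) * s ≤ x * (4 * r) := by
      apply mul_le_mul _ hs h0 (by linarith)
      linarith
    have h3 : ((M : ℝ) * s) ^ 2 ≤ (x * (4 * r)) ^ 2 := by gcongr
    have h4 : (x * r) ^ 2 * x ^ 3 = r := by
      calc (x * r) ^ 2 * x ^ 3 = r * (r * x ^ 5) := by ring
        _ = r := by rw [hinv, mul_one]
    have h5 : (x * r) ^ 2 * 8 ≤ r := by
      calc (x * r) ^ 2 * 8 ≤ (x * r) ^ 2 * x ^ 3 := by gcongr
        _ = r := h4
    nlinarith

theorem gFun_aux2 (n : ℕ) (N : ℕ → ℕ) (hN1 : 2 ≤ N 1)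
    (hmono : ∀ i j, 1 ≤ i → i ≤ j → j ≤ n → N i ≤ N j) (m : ℕ) :
    ∀ K, 1 ≤ K → K + m = n →
      0 ≤ (List.range' K (m + 1)).foldr (fun i s => gFun (N i) s) 0 ∧
      (List.range' K (m + 1)).foldr (fun i s => gFun (N i) s) 0 ≤ 4 * ((N K : ℝ) ^ 5)⁻¹ := by
  induction m with
  | zero =>
    intro K hK hn
    have h2 : 2 ≤ N K := hN1.trans (hmono 1 K le_rfl hK (by omega))
    obtain ⟨M, hM⟩ : ∃ M, N K = M + 1 := ⟨N K - 1, by omega⟩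
    simp only [List.range'_succ, List.foldr_cons, List.range'_zero, List.foldr_nil]
    rw [hM]
    exact gFun_aux M (by omega) 0 le_rfl (by positivity)
  | succ m ih =>
    intro K hK hn
    have h2 : 2 ≤ N K := hN1.trans (hmono 1 K le_rfl hK (by omega))
    obtain ⟨h0, h1⟩ := ih (K + 1) (by omega) (by omega)
    have hle : N K ≤ N (K + 1) := hmono K (K + 1) hK (by omega) (by omega)
    rw [List.range'_succ, List.foldr_cons]
    have h3 : 4 * ((N (K + 1) : ℝ) ^ 5)⁻¹ ≤ 4 * ((N K : ℝ) ^ 5)⁻¹ := by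
      have : (0 : ℝ) < N K := by exact_mod_cast (by omega : 0 < N K)
      have : (N K : ℝ) ≤ N (K + 1) := by exact_mod_cast hle
      gcongr
    have h4 := h1.trans h3
    obtain ⟨M, hM⟩ : ∃ M, N K = M + 1 := ⟨N K - 1, by omega⟩
    rw [hM] at h4 ⊢
    exact gFun_aux M (by omega) _ h0 h4

/-- For a nondecreasing finite sequence `(N_k)_{k=1}^n` of integers with
`N 1 ≥ 2`, the composition `(g_{N_k} ∘ ⋯ ∘ g_{N_n})(0)` is at most `4 N_k ^ (-5)` for every
`1 ≤ k ≤ n`; in particular `(g_{N_1} ∘ ⋯ ∘ g_{N_n})(0) ≤ 1/8`. -/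
theorem gFun_composition_bound
    (n : ℕ) (N : ℕ → ℕ) (hN1 : 2 ≤ N 1)
    (hmono : ∀ i j, 1 ≤ i → i ≤ j → j ≤ n → N i ≤ N j) :
    (∀ K, 1 ≤ K → K ≤ n →
      (List.range' K (n + 1 - K)).foldr (fun i s => gFun (N i) s) 0 ≤ 4 * ((N K : ℝ) ^ 5)⁻¹) ∧
    (List.range' 1 n).foldr (fun i s => gFun (N i) s) 0 ≤ 1 / 8 := by
  have key : ∀ K, 1 ≤ K → K ≤ n →
      (List.range' K (n + 1 - K)).foldr (fun i s => gFun (N i) s) 0 ≤ 4 * ((N K : ℝ) ^ 5)⁻¹ := by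
    intro K hK hn
    have h := (gFun_aux2 n N hN1 hmono (n - K) K hK (by omega)).2
    rwa [show n - K + 1 = n + 1 - K by omega] at h
  refine ⟨key, ?_⟩
  rcases Nat.eq_zero_or_pos n with h | h
  · subst h
    norm_num
  · have h1 := key 1 le_rfl h
    rw [Nat.add_sub_cancel] at h1
    refine h1.trans ?_
    have h2 : (2 : ℝ) ≤ N 1 := by exact_mod_cast hN1
    calc 4 * ((N 1 : ℝ) ^ 5)⁻¹ ≤ 4 * ((2 : ℝ) ^ 5)⁻¹ := by gcongr
      _ = 1 / 8 := by norm_num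
end
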